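/- Let T ∈ (0,1) and suppose that Z(T) = ∑_{p ∈ dom U} 2^{−|p|/T} is a computable real number. Then: (i) T is right-computable but not left-computable; (ii) T is weakly Chaitin T-random and T-compressible; (iii) lim_{n→∞} H(T_n)/n = T. -/

import Mathlib

open Filter

/-- A set of finite binary strings is prefix-free if no element of it is a
prefix of another (distinct) element of it. -/
def PrefixFree (S : Set (List Bool)) : Prop :=
  ∀ p ∈ S, ∀ q ∈ S, p <+: q → p = q

/-- A computer: a partial recursive function from finite binary strings to
finite binary strings whose domain is a prefix-free set. -/
structure Computer where
  f : List Bool →. List Bool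
  partrec : Partrec f
  prefixFree : PrefixFree {p | (f p).Dom}

/-- The domain of a computer. -/
def Computer.domain (C : Computer) : Set (List Bool) := {p | (C.f p).Dom}

/-- A computer `U` is optimal if every computer can be simulated on `U` with
only a constant increase in program length. -/
def IsOptimal (U : Computer) : Prop :=
  ∀ C : Computer, ∃ d : ℕ, ∀ p : List Bool, (C.f p).Dom →
    ∃ p' : List Bool, p'.length ≤ p.length + d ∧ ∀ s, s ∈ C.f p → s ∈ U.f p'

/-- Program-size complexity `H(s)`: the minimal length of a program `p`
with `U(p) = s`. -/
noncomputable def H (U : Computer) (s : List Bool) : ℕ :=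
  sInf {n | ∃ p : List Bool, p.length = n ∧ s ∈ U.f p}

/-- The `n`-th bit (`n ≥ 1`) of the base-two expansion of `x mod 1`
(the expansion chosen with infinitely many zeros). -/
noncomputable def binDigit (x : ℝ) (n : ℕ) : Bool :=
  decide (⌊Int.fract x * 2 ^ n⌋ % 2 = 1)

/-- The first `n` bits of the base-two expansion of `x mod 1` (with
infinitely many zeros). -/
noncomputable def bits (x : ℝ) (n : ℕ) : List Bool :=
  (List.range n).map fun i => binDigit x (i + 1)

/-- A real `x` is weakly Chaitin `D`-random (w.r.t. the computer `U`). -/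
def WeaklyChaitinRandom (U : Computer) (D x : ℝ) : Prop :=
  ∃ c : ℝ, ∀ n : ℕ, 1 ≤ n → D * n - c ≤ (H U (bits x n) : ℝ)

/-- A real `x` is Chaitin `D`-random (w.r.t. the computer `U`). -/
def ChaitinRandom (U : Computer) (D x : ℝ) : Prop :=
  Tendsto (fun n : ℕ => (H U (bits x n) : ℝ) - D * n) atTop atTop

/-- A real `x` is `D`-compressible (w.r.t. the computer `U`). -/
def DCompressible (U : Computer) (D x : ℝ) : Prop :=
  Filter.limsup (fun n : ℕ => (H U (bits x n) : ℝ) / n) atTop ≤ D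

/-- A computable real number. -/
def ComputableReal (T : ℝ) : Prop :=
  ∃ f : ℕ → ℚ, Computable f ∧ ∀ n : ℕ, 1 ≤ n → |T - (f n : ℝ)| < 1 / n

/-- A right-computable real number. -/
def RightComputable (T : ℝ) : Prop :=
  ∃ g : ℕ → ℚ, Computable g ∧ (∀ n, T ≤ (g n : ℝ)) ∧
    Tendsto (fun n => ((g n : ℚ) : ℝ)) atTop (nhds T)

/-- A left-computable real number. -/
def LeftComputable (T : ℝ) : Prop := RightComputable (-T)

/-- The term `2 ^ (-|p| / T)` of the partition function `Z(T)`. -/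
noncomputable def zterm (U : Computer) (T : ℝ) (p : U.domain) : ℝ :=
  (2 : ℝ) ^ (-((p : List Bool).length : ℝ) / T)

/-- The term `|p| ^ Q * 2 ^ (-|p| / T)` of `W(Q,T)`. -/
noncomputable def wterm (U : Computer) (Q T : ℝ) (p : U.domain) : ℝ :=
  ((p : List Bool).length : ℝ) ^ Q * (2 : ℝ) ^ (-((p : List Bool).length : ℝ) / T)

/-- The term `|p| * 2 ^ (-|p| / T)` of `W(1,T)`. -/
noncomputable def wlterm (U : Computer) (T : ℝ) (p : U.domain) : ℝ :=
  ((p : List Bool).length : ℝ) * (2 : ℝ) ^ (-((p : List Bool).length : ℝ) / T)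

/-- The term `|p| ^ 2 * 2 ^ (-|p| / T)` of `W(2,T)`. -/
noncomputable def wsqterm (U : Computer) (T : ℝ) (p : U.domain) : ℝ :=
  ((p : List Bool).length : ℝ) ^ 2 * (2 : ℝ) ^ (-((p : List Bool).length : ℝ) / T)

/-- A lower-computable function `f : ℕ⁺ → [0,∞)` (represented on `ℕ`,
with all conditions imposed on positive arguments). -/
def LowerComputableFun (f : ℕ → ℝ) : Prop :=
  ∃ a : ℕ → ℕ → ℚ, Computable₂ a ∧
    (∀ k n : ℕ, 1 ≤ k → 1 ≤ n → (a k n : ℝ) ≤ f n) ∧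
    (∀ n : ℕ, 1 ≤ n → Tendsto (fun k => ((a k n : ℚ) : ℝ)) atTop (nhds (f n)))

/-- A lower-computable semi-measure on finite binary strings. -/
def LowerComputableSemiMeasure (r : List Bool → ℝ) : Prop :=
  (∀ s, 0 ≤ r s) ∧ (∀ s, r s ≤ 1) ∧ Summable r ∧ (∑' s, r s) ≤ 1 ∧
    ∃ f : ℕ → List Bool → ℚ, Computable₂ f ∧
      (∀ n s, ((f n s : ℚ) : ℝ) ≤ r s) ∧
      (∀ s, Tendsto (fun n => ((f n s : ℚ) : ℝ)) atTop (nhds (r s)))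

/-- A universal probability. -/
def UniversalProbability (m : List Bool → ℝ) : Prop :=
  LowerComputableSemiMeasure m ∧
    ∀ r : List Bool → ℝ, LowerComputableSemiMeasure r →
      ∃ c : ℝ, 0 < c ∧ ∀ s, c * r s ≤ m s

/-!
Let `Z_k(t)` be the part of the partition function coming from the programs found to halt by
stage `k`. For `t ≥ T` close to `T` and `k` large, `Z_k(t) - Z_k(T)` lies between constant multiples
of `t - T`, so that approximating `Z(T)` and approximating `T` amount to the same thing.

Right-computability: `T < t` iff `Z(T) < Z_k(t)` for some `k`, which is semidecidable.

Incompressibility: from the first `n` bits of `T` one finds a stage `k` at which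
`Z(T) - Z_k(T) = O(2 ^ (-n))`; a program that has not halted by then contributes at most
`O(2 ^ (-n))` to `Z(T)` and hence has length at least `T n - O(1)`.

Compressibility: about `T n` bits of `Z(1)` suffice to find a stage `k` with
`Z(1) - Z_k(1) ≤ 2 ^ (-T n)`. As `1 / T ≥ 1`, this forces `Z(T) - Z_k(T) ≤ 2 ^ (-n)`, and then `T`
is known up to `O(2 ^ (-n))`. Finally, a left- and right-computable `T` would have `H(T_n) = o(n)`.
-/

/-! ### Recursively enumerable predicates -/

section RecursivelyEnumerable

variable {α β : Type*} [Primcodable α] [Primcodable β]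

theorem rePred_comp {P : β → Prop} {f : α → β} (hP : REPred P) (hf : Computable f) :
    REPred fun a => P (f a) :=
  Partrec.comp hP hf

theorem rePred_and {P Q : α → Prop} (hP : REPred P) (hQ : REPred Q) :
    REPred fun a => P a ∧ Q a := by
  refine (Partrec.dom_re (hP.bind (Partrec.comp hQ Computable.fst).to₂)).of_eq fun a => ?_
  simp [Part.assert]

theorem rePred_nat_le {f g : α → ℕ} (hf : Computable f) (hg : Computable g) :
    REPred fun a => f a ≤ g a :=
  rePred_comp Primrec.nat_le.computablePred.to_re (hf.pair hg)

theorem rePred_nat_lt {f g : α → ℕ} (hf : Computable f) (hg : Computable g) :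
    REPred fun a => f a < g a :=
  rePred_comp Primrec.nat_lt.computablePred.to_re (hf.pair hg)

theorem rePred_eq {f g : α → β} (hf : Computable f) (hg : Computable g) :
    REPred fun a => f a = g a := by
  classical exact rePred_comp Primrec.eq.computablePred.to_re (hf.pair hg)

theorem rePred_mem_partrec {f : α →. β} (hf : Partrec f) :
    REPred fun x : α × β => x.2 ∈ f x.1 := by
  have heq : REPred fun y : (α × β) × β => y.1.2 = y.2 :=
    rePred_eq (Computable.snd.comp Computable.fst) Computable.snd
  refine (Partrec.dom_re ((hf.comp Computable.fst).bind heq.to₂)).of_eq fun x => ?_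
  simp only [Part.bind_dom, Part.assert, Part.mem_eq]
  exact ⟨fun ⟨h, e, _⟩ => ⟨h, e.symm⟩, fun ⟨h, e⟩ => ⟨h, e.symm, trivial⟩⟩

theorem exists_primrec_of_rePred {P : α → Prop} (hP : REPred P) :
    ∃ f : α → ℕ → Bool, Primrec₂ f ∧ ∀ a, P a ↔ ∃ n, f a n = true := by
  obtain ⟨c, hc⟩ := Nat.Partrec.Code.exists_code.1 hP
  refine ⟨fun a n => (c.evaln n (Encodable.encode a)).isSome,
    Primrec.option_isSome.comp (Nat.Partrec.Code.primrec_evaln.comp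
      ((Primrec.snd.pair (Primrec.const c)).pair (Primrec.encode.comp Primrec.fst))), fun a => ?_⟩
  have hdom : P a ↔ (c.eval (Encodable.encode a)).Dom := by simp [hc, Part.assert]
  simp only [hdom, Part.dom_iff_mem, Nat.Partrec.Code.evaln_complete, Option.isSome_iff_exists,
    Option.mem_def]
  exact exists_comm

theorem exists_primrec_enumeration {R : α → β → Prop} (hR : REPred fun x : α × β => R x.1 x.2) :
    ∃ e : α → ℕ → Option β, Primrec₂ e ∧ ∀ a b, R a b ↔ ∃ n, e a n = some b := by
  obtain ⟨g, hg, hgR⟩ := exists_primrec_of_rePred hR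
  have hcode : Primrec fun x : α × ℕ => x.2.unpair := Primrec.unpair.comp Primrec.snd
  refine ⟨fun a n => (Encodable.decode (α := β) n.unpair.1).bind fun b =>
      bif g (a, b) n.unpair.2 then some b else none,
    Primrec.option_bind (Primrec.decode.comp (Primrec.fst.comp hcode)) (Primrec.cond
      (hg.comp ((Primrec.fst.comp Primrec.fst).pair Primrec.snd)
        (Primrec.snd.comp (hcode.comp Primrec.fst)))
      (Primrec.option_some.comp Primrec.snd) (Primrec.const none)), fun a b => ⟨fun hab => ?_, ?_⟩⟩
  · obtain ⟨n, hn⟩ := (hgR (a, b)).1 hab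
    exact ⟨Nat.pair (Encodable.encode b) n, by simp [hn]⟩
  · rintro ⟨n, hn⟩
    obtain ⟨b', -, hb'⟩ := Option.bind_eq_some_iff.1 hn
    cases hg' : g (a, b') n.unpair.2 with
    | false => simp [hg'] at hb'
    | true =>
      obtain rfl : b' = b := by simpa [hg'] using hb'
      exact (hgR (a, b')).2 ⟨_, hg'⟩

theorem exists_partrec_selector {R : α → β → Prop} (hR : REPred fun x : α × β => R x.1 x.2) :
    ∃ f : α →. β, Partrec f ∧ (∀ a, ∀ b ∈ f a, R a b) ∧ ∀ a b, R a b → (f a).Dom := by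
  obtain ⟨e, he, heR⟩ := exists_primrec_enumeration hR
  refine ⟨fun a => Nat.rfindOpt (e a), Partrec.rfindOpt he.to_comp,
    fun a b hb => (heR a b).2 (Nat.rfindOpt_spec hb), fun a b hab => Nat.rfindOpt_dom.2 ?_⟩
  obtain ⟨n, hn⟩ := (heR a b).1 hab
  exact ⟨n, b, hn⟩

theorem rePred_exists {R : α → β → Prop} (hR : REPred fun x : α × β => R x.1 x.2) :
    REPred fun a => ∃ b, R a b := by
  obtain ⟨f, hf, hsound, hcomplete⟩ := exists_partrec_selector hR
  exact (Partrec.dom_re hf).of_eq fun a =>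
    ⟨fun h => ⟨_, hsound a _ (Part.get_mem h)⟩, fun ⟨b, hb⟩ => hcomplete a b hb⟩

theorem exists_computable_range_eq {P : α → Prop} (hP : REPred P) (hne : ∃ a, P a) :
    ∃ f : ℕ → α, Computable f ∧ Set.range f = {a | P a} := by
  obtain ⟨e, he, heP⟩ := exists_primrec_enumeration (R := fun _ : Unit => P)
    (rePred_comp hP Computable.snd)
  obtain ⟨a₀, ha₀⟩ := hne
  refine ⟨fun n => (e () n).getD a₀, (Primrec.option_getD.comp
    (he.comp (Primrec.const ()) Primrec.id) (Primrec.const a₀)).to_comp,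
    Set.ext fun a => ⟨?_, fun ha => ?_⟩⟩
  · rintro ⟨n, rfl⟩
    cases hn : e () n with
    | none => simpa [hn] using ha₀
    | some b => simpa [hn] using (heP () b).2 ⟨n, hn⟩
  · obtain ⟨n, hn⟩ := (heP () a).1 ha
    exact ⟨n, by simp [hn]⟩

end RecursivelyEnumerable

/-! ### Computability of rational numbers -/

section RationalNumbers

theorem primrec_count {p : ℕ → Prop} [DecidablePred p] (hp : PrimrecPred p) :
    Primrec (Nat.count p) := by
  refine (Primrec.nat_rec₁ (f := fun n c => if p n then c + 1 else c) 0
    (Primrec.ite (hp.comp Primrec.fst) (Primrec.succ.comp Primrec.snd)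
      Primrec.snd)).of_eq fun n => ?_
  induction n with
  | zero => simp
  | succ n ih => simp only [ih, Nat.count_succ]; split_ifs <;> rfl

theorem computable_nth {p : ℕ → Prop} (hp : PrimrecPred p) (hinf : {n | p n}.Infinite) :
    Computable (Nat.nth p) := by
  classical
  have hrel : ComputablePred fun x : ℕ × ℕ => p x.2 ∧ Nat.count p x.2 = x.1 :=
    ((hp.comp Primrec.snd).and
      (Primrec.eq.comp ((primrec_count hp).comp Primrec.snd) Primrec.fst)).computablePred
  have hex (n : ℕ) : ∃ m, p m ∧ Nat.count p m = n :=
    ⟨Nat.nth p n, Nat.nth_mem_of_infinite hinf n, Nat.count_nth_of_infinite hinf n⟩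
  refine (Computable.find (P := fun n m => p m ∧ Nat.count p m = n) hrel hex).of_eq fun n => ?_
  obtain ⟨hmem, hcount⟩ := Nat.find_spec (hex n)
  have hnth := Nat.nth_count hmem
  rw [hcount] at hnth
  exact hnth.symm

theorem primrec_gcd : Primrec₂ Nat.gcd := by
  have hdvd {f g : (ℕ × ℕ) × ℕ → ℕ} (hf : Primrec f) (hg : Primrec g) :
      PrimrecPred fun x => f x ∣ g x :=
    (Primrec.eq.comp (Primrec.nat_mod.comp hg hf) (Primrec.const 0)).of_eq fun x =>
      (Nat.dvd_iff_mod_eq_zero).symm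
  have hfind : Primrec fun x : ℕ × ℕ =>
      Nat.findGreatest (fun d => d ∣ x.1 ∧ d ∣ x.2) (x.1 + x.2) :=
    Primrec.nat_findGreatest (Primrec.nat_add.comp Primrec.fst Primrec.snd)
      ((hdvd Primrec.snd (Primrec.fst.comp Primrec.fst)).and
        (hdvd Primrec.snd (Primrec.snd.comp Primrec.fst)))
  refine hfind.of_eq fun ⟨a, b⟩ => Nat.findGreatest_eq_iff.2
    ⟨?_, fun _ => ⟨Nat.gcd_dvd_left a b, Nat.gcd_dvd_right a b⟩, fun d hlt hle hd => ?_⟩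
  · rcases Nat.eq_zero_or_pos a with rfl | ha
    · simp
    · exact (Nat.gcd_le_left b ha).trans (Nat.le_add_right a b)
  · have hpos : 0 < Nat.gcd a b := Nat.gcd_pos_iff.2 (by dsimp only at hle; omega)
    exact hlt.not_ge (Nat.le_of_dvd hpos (Nat.dvd_gcd hd.1 hd.2))

theorem encode_int (z : ℤ) :
    Encodable.encode z = if 0 ≤ z then 2 * z.natAbs else 2 * z.natAbs - 1 := by
  cases z with
  | ofNat n => rfl
  | negSucc n => rw [if_neg (by simp)]; rfl

theorem primrec_int_natAbs : Primrec Int.natAbs :=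
  (Primrec.nat_div.comp (Primrec.succ.comp Primrec.encode) (Primrec.const 2)).of_eq fun z => by
    rw [encode_int]; split_ifs <;> omega

theorem primrec_int_toNat : Primrec Int.toNat :=
  (Primrec.ite (Primrec.eq.comp (Primrec.nat_mod.comp Primrec.encode (Primrec.const 2))
    (Primrec.const 0)) (Primrec.nat_div.comp Primrec.encode (Primrec.const 2))
    (Primrec.const 0)).of_eq fun z => by
      rw [encode_int]; split_ifs <;> omega

/-- The pairing code of a fraction in lowest terms. The `Primcodable` instance of `ℚ` encodes `q` by
the rank of `ratCode q` among the codes of all rational numbers. -/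
def ratCode (q : ℚ) : ℕ :=
  Nat.pair (Encodable.encode q.num) q.den

theorem range_ratCode : Set.range ratCode =
    {y | 0 < y.unpair.2 ∧ (Denumerable.ofNat ℤ y.unpair.1).natAbs.Coprime y.unpair.2} := by
  ext y
  constructor
  · rintro ⟨q, rfl⟩
    simpa only [ratCode, Set.mem_ofPred_eq, Nat.unpair_pair, Denumerable.ofNat_encode] using
      ⟨q.den_pos, q.reduced⟩
  · rintro ⟨hpos, hcop⟩
    exact ⟨⟨_, y.unpair.2, hpos.ne', hcop⟩, by
      simp only [ratCode, Denumerable.encode_ofNat, Nat.pair_unpair]⟩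

theorem primrecPred_mem_range_ratCode : PrimrecPred (· ∈ Set.range ratCode) := by
  have hfst : Primrec fun y : ℕ => y.unpair.1 := Primrec.fst.comp Primrec.unpair
  have hsnd : Primrec fun y : ℕ => y.unpair.2 := Primrec.snd.comp Primrec.unpair
  have hgcd := primrec_gcd.comp (primrec_int_natAbs.comp ((Primrec.ofNat ℤ).comp hfst)) hsnd
  refine ((Primrec.nat_lt.comp (Primrec.const 0) hsnd).and
    (Primrec.eq.comp hgcd (Primrec.const 1))).of_eq fun y => ?_
  rw [range_ratCode]
  rfl

theorem ratCode_injective : Function.Injective ratCode := fun q r h => by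
  obtain ⟨hnum, hden⟩ := Nat.pair_eq_pair.1 h
  exact Rat.ext (Encodable.encode_injective hnum) hden

theorem nth_range_ratCode (q : ℚ) :
    Nat.nth (· ∈ Set.range ratCode) (@Encodable.encode ℚ Primcodable.toEncodable q) =
      ratCode q := by
  let dec : DecidablePred (· ∈ Set.range ratCode) := Encodable.decidableRangeEncode ℚ
  have hencode : @Encodable.encode ℚ Primcodable.toEncodable q =
    Nat.count (· ∈ Set.range ratCode) (ratCode q) := rfl
  rw [hencode, Nat.nth_count (Set.mem_range_self q)]

theorem computable_ratCode : Computable ratCode := by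
  have hinf := Set.infinite_range_of_injective ratCode_injective
  exact ((computable_nth primrecPred_mem_range_ratCode hinf).comp Computable.encode).of_eq
    nth_range_ratCode

theorem computable_rat_num : Computable Rat.num :=
  (((Primrec.ofNat ℤ).comp (Primrec.fst.comp Primrec.unpair)).to_comp.comp
    computable_ratCode).of_eq fun q => by
      simp only [ratCode, Nat.unpair_pair, Denumerable.ofNat_encode]

theorem computable_rat_den : Computable Rat.den :=
  ((Primrec.snd.comp Primrec.unpair).to_comp.comp computable_ratCode).of_eq fun q => by
    simp only [ratCode, Nat.unpair_pair]

end RationalNumbers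

/-! ### Computable real numbers -/

section ComputableReals

theorem primrec_int_toNat_neg : Primrec fun z : ℤ => (-z).toNat :=
  (Primrec.nat_sub.comp primrec_int_natAbs primrec_int_toNat).of_eq fun z => by omega

theorem primrec_nat_pow : Primrec₂ ((· ^ ·) : ℕ → ℕ → ℕ) :=
  Primrec₂.unpaired'.1 Nat.Primrec.pow

theorem computable_two_pow : Computable fun n : ℕ => 2 ^ n :=
  (primrec_nat_pow.comp (Primrec.const 2) Primrec.id).to_comp

theorem computable_nat_add {α : Type*} [Primcodable α] {f g : α → ℕ} (hf : Computable f)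
    (hg : Computable g) : Computable fun a => f a + g a :=
  Primrec.nat_add.to_comp.comp hf hg

theorem computable_nat_mul {α : Type*} [Primcodable α] {f g : α → ℕ} (hf : Computable f)
    (hg : Computable g) : Computable fun a => f a * g a :=
  Primrec.nat_mul.to_comp.comp hf hg

theorem rat_eq_toNat_sub_div (q : ℚ) :
    q = ((q.num.toNat : ℚ) - (-q.num).toNat) / q.den := by
  have hnum : (q.num : ℚ) = (q.num.toNat : ℚ) - (-q.num).toNat := by
    exact_mod_cast (Int.toNat_sub_toNat_neg q.num).symm
  rw [← hnum, Rat.num_div_den]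

theorem toNat_num_div_den {K : Type*} [Field K] [LinearOrder K] [IsStrictOrderedRing K] (q : ℚ) :
    (q.num.toNat : K) / q.den = max (q : K) 0 := by
  rcases le_total 0 q with hq | hq
  · rw [max_eq_left (Rat.cast_nonneg.2 hq), Rat.cast_def q, ← Int.cast_natCast q.num.toNat,
      Int.toNat_of_nonneg (Rat.num_nonneg.2 hq)]
  · rw [max_eq_right (Rat.cast_nonpos.2 hq), Int.toNat_of_nonpos (Rat.num_nonpos.2 hq),
      Nat.cast_zero, zero_div]

theorem computablePred_rat_le : ComputablePred fun x : ℚ × ℚ => x.1 ≤ x.2 := by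
  have hpos {f : ℚ × ℚ → ℚ} (hf : Computable f) : Computable fun x => (f x).num.toNat :=
    primrec_int_toNat.to_comp.comp (computable_rat_num.comp hf)
  have hneg {f : ℚ × ℚ → ℚ} (hf : Computable f) : Computable fun x => (-(f x).num).toNat :=
    primrec_int_toNat_neg.to_comp.comp (computable_rat_num.comp hf)
  have h₁ := Computable.fst (α := ℚ) (β := ℚ)
  have h₂ := Computable.snd (α := ℚ) (β := ℚ)
  have hd₁ := computable_rat_den.comp h₁
  have hd₂ := computable_rat_den.comp h₂
  refine ((Primrec.nat_le.decide.to_comp.comp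
    (computable_nat_add (computable_nat_mul (hpos h₁) hd₂) (computable_nat_mul (hneg h₂) hd₁))
    (computable_nat_add (computable_nat_mul (hpos h₂) hd₁)
      (computable_nat_mul (hneg h₁) hd₂))).of_eq fun x => ?_).computablePred
  have hnum₁ := Int.toNat_sub_toNat_neg x.1.num
  have hnum₂ := Int.toNat_sub_toNat_neg x.2.num
  rw [decide_eq_decide, Rat.le_iff]
  zify
  constructor <;> intro h
  · linear_combination h - x.2.den * hnum₁ + x.1.den * hnum₂
  · linear_combination h + x.2.den * hnum₁ - x.1.den * hnum₂

theorem computable_rat_min : Computable₂ (min : ℚ → ℚ → ℚ) :=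
  (Computable.cond computablePred_rat_le.decide Computable.fst Computable.snd).of_eq fun x => by
    simp [min_def, Bool.cond_decide]

theorem RightComputable.rePred_mul_add_lt {T : ℝ} (hT : RightComputable T) {α : Type*}
    [Primcodable α] {a b c : α → ℕ} (ha : Computable a) (hb : Computable b) (hc : Computable c) :
    REPred fun x => T * b x + c x < a x := by
  obtain ⟨g, hg, hTg, hlim⟩ := hT
  have hb' : Computable fun y : α × ℕ => b y.1 := hb.comp Computable.fst
  have hnum := computable_rat_num.comp (hg.comp (Computable.snd (α := α)))
  have hden := computable_rat_den.comp (hg.comp (Computable.snd (α := α)))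
  have happrox : REPred fun y : α × ℕ =>
      (g y.2).num.toNat * b y.1 + c y.1 * (g y.2).den <
        a y.1 * (g y.2).den + (-(g y.2).num).toNat * b y.1 :=
    rePred_nat_lt (computable_nat_add (computable_nat_mul (primrec_int_toNat.to_comp.comp hnum) hb')
        (computable_nat_mul (hc.comp Computable.fst) hden))
      (computable_nat_add (computable_nat_mul (ha.comp Computable.fst) hden)
        (computable_nat_mul (primrec_int_toNat_neg.to_comp.comp hnum) hb'))
  refine (rePred_exists (R := fun x n => (g n : ℝ) * b x + c x < a x)
    (happrox.of_eq fun ⟨x, n⟩ => ?_)).of_eq fun x => ⟨?_, fun h => ?_⟩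
  · have hd : (0 : ℝ) < (g n).den := by exact_mod_cast (g n).den_pos
    have hq : (g n : ℝ) * (g n).den = (g n).num.toNat - (-(g n).num).toNat := by
      have h := rat_eq_toNat_sub_div (g n)
      rw [eq_div_iff (by exact_mod_cast (g n).den_ne_zero)] at h
      exact_mod_cast h
    have hscale : ((g n : ℝ) * b x + c x) * (g n).den =
        (g n).num.toNat * b x + c x * (g n).den - (-(g n).num).toNat * b x := by
      linear_combination (b x : ℝ) * hq
    dsimp only
    rw [← mul_lt_mul_iff_left₀ hd, hscale, sub_lt_iff_lt_add]
    norm_cast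
  · rintro ⟨n, hn⟩
    exact (add_le_add_left (mul_le_mul_of_nonneg_right (hTg n) (Nat.cast_nonneg _)) _).trans_lt hn
  · exact (((hlim.mul_const (b x : ℝ)).add_const (c x : ℝ)).eventually_lt_const h).exists

theorem exists_computable_iterate {σ : Type*} [Primcodable σ] {step : ℕ → σ → σ}
    (hstep : Computable₂ step) (s₀ : σ) :
    ∃ g : ℕ → σ, Computable g ∧ g 0 = s₀ ∧ ∀ n, g (n + 1) = step n (g n) := by
  have hstep' : Computable₂ fun (_ : ℕ) (y : ℕ × σ) => step y.1 y.2 :=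
    hstep.comp (Computable.fst.comp Computable.snd) (Computable.snd.comp Computable.snd)
  exact ⟨fun n => n.rec s₀ step,
    Computable.nat_rec (f := fun n : ℕ => n) Computable.id (Computable.const s₀) hstep',
    rfl, fun _ => rfl⟩

theorem rightComputable_of_rePred_lt {T : ℝ} (hT : REPred fun q : ℚ => T < q) :
    RightComputable T := by
  obtain ⟨f, hf, hrange⟩ := exists_computable_range_eq hT (exists_rat_gt T)
  have hTf (n : ℕ) : T < f n := hrange.subset (Set.mem_range_self n)
  have hstep : Computable₂ fun n q => min q (f n) :=
    computable_rat_min.comp Computable.snd (hf.comp Computable.fst)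
  obtain ⟨g, hg, hg_zero, hg_succ⟩ := exists_computable_iterate hstep (f 0)
  have hg_anti : Antitone g := antitone_nat_of_succ_le fun n =>
    (hg_succ n).trans_le (min_le_left _ _)
  have hTg (n : ℕ) : T < g n := by
    induction n with
    | zero => rw [hg_zero]; exact hTf 0
    | succ n ih => rw [hg_succ, Rat.cast_min]; exact lt_min ih (hTf n)
  refine ⟨g, hg, fun n => (hTg n).le, tendsto_order.2
    ⟨fun a ha => .of_forall fun n => ha.trans (hTg n), fun a ha => ?_⟩⟩
  obtain ⟨q, hTq, hqa⟩ := exists_rat_btwn ha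
  obtain ⟨n, rfl⟩ : q ∈ Set.range f := hrange.superset hTq
  filter_upwards [eventually_ge_atTop (n + 1)] with m hm
  exact (Rat.cast_le.2 ((hg_anti hm).trans
    ((hg_succ n).trans_le (min_le_right _ _)))).trans_lt hqa

/-- A family of nonnegative reals that is computable uniformly in the parameter: `f a * 2 ^ M` is
approximated by a natural number `F a M` up to an error `C a` that does not depend on the
precision `M`. Allowing any error bounded in `M` makes sums and integer multiples immediate. -/
def DyadicComputable {α : Type*} [Primcodable α] (f : α → ℝ) : Prop :=
  ∃ (F : α → ℕ → ℕ) (C : α → ℕ), Computable₂ F ∧ Computable C ∧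
    ∀ a M, |f a * 2 ^ M - F a M| ≤ C a

namespace DyadicComputable

variable {α β : Type*} [Primcodable α] [Primcodable β] {f g : α → ℝ}

theorem comp (hf : DyadicComputable f) {φ : β → α} (hφ : Computable φ) :
    DyadicComputable fun b => f (φ b) := by
  obtain ⟨F, C, hF, hC, hFC⟩ := hf
  exact ⟨fun b => F (φ b), fun b => C (φ b), hF.comp (hφ.comp Computable.fst) Computable.snd,
    hC.comp hφ, fun b => hFC (φ b)⟩

theorem natCast {n : α → ℕ} (hn : Computable n) : DyadicComputable fun a => (n a : ℝ) :=
  ⟨fun a M => n a * 2 ^ M, fun _ => 0,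
    computable_nat_mul (hn.comp Computable.fst) (computable_two_pow.comp Computable.snd),
    Computable.const 0, fun a M => by simp⟩

theorem add (hf : DyadicComputable f) (hg : DyadicComputable g) :
    DyadicComputable fun a => f a + g a := by
  obtain ⟨F, C, hF, hC, hFC⟩ := hf
  obtain ⟨G, D, hG, hD, hGD⟩ := hg
  refine ⟨fun a M => F a M + G a M, fun a => C a + D a, computable_nat_add hF hG,
    computable_nat_add hC hD, fun a M => ?_⟩
  push_cast
  rw [add_mul, add_sub_add_comm]
  exact (abs_add_le _ _).trans (add_le_add (hFC a M) (hGD a M))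

theorem natCast_mul {n : α → ℕ} (hn : Computable n) (hf : DyadicComputable f) :
    DyadicComputable fun a => n a * f a := by
  obtain ⟨F, C, hF, hC, hFC⟩ := hf
  refine ⟨fun a M => n a * F a M, fun a => n a * C a,
    computable_nat_mul (hn.comp Computable.fst) hF, computable_nat_mul hn hC, fun a M => ?_⟩
  push_cast
  rw [mul_assoc, ← mul_sub, abs_mul, Nat.abs_cast]
  exact mul_le_mul_of_nonneg_left (hFC a M) (Nat.cast_nonneg _)

theorem rePred_lt (hf : DyadicComputable f) (hg : DyadicComputable g) :
    REPred fun a => f a < g a := by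
  obtain ⟨F, C, hF, hC, hFC⟩ := hf
  obtain ⟨G, D, hG, hD, hGD⟩ := hg
  refine (rePred_exists (R := fun a M => F a M + C a + D a < G a M) (rePred_nat_lt
    (computable_nat_add (computable_nat_add hF (hC.comp Computable.fst)) (hD.comp Computable.fst))
    hG)).of_eq fun a => ⟨fun ⟨M, hM⟩ => ?_, fun hlt => ?_⟩
  · have hM' : (F a M + C a + D a : ℝ) < G a M := by exact_mod_cast hM
    have hF' := abs_le.1 (hFC a M)
    have hG' := abs_le.1 (hGD a M)
    exact lt_of_mul_lt_mul_right (by linarith) (pow_nonneg zero_le_two M)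
  · obtain ⟨M, hM⟩ := pow_unbounded_of_one_lt (2 * (C a + D a) / (g a - f a)) (one_lt_two (α := ℝ))
    rw [div_lt_iff₀ (sub_pos.2 hlt)] at hM
    have hF' := abs_le.1 (hFC a M)
    have hG' := abs_le.1 (hGD a M)
    have : (F a M + C a + D a : ℝ) < G a M := by linarith
    exact ⟨M, by exact_mod_cast this⟩

theorem const {Z : ℝ} (hZ : ComputableReal Z) (hZ0 : 0 ≤ Z) :
    DyadicComputable fun _ : α => Z := by
  obtain ⟨q, hq, hqZ⟩ := hZ
  have hq' : Computable fun M => q (2 ^ M) := hq.comp computable_two_pow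
  refine ⟨fun _ M => (q (2 ^ M)).num.toNat * 2 ^ M / (q (2 ^ M)).den, fun _ => 2,
    (Primrec.nat_div.to_comp.comp (computable_nat_mul (primrec_int_toNat.to_comp.comp
      (computable_rat_num.comp hq')) computable_two_pow) (computable_rat_den.comp hq')).comp
      Computable.snd, Computable.const 2, fun _ M => ?_⟩
  set r : ℝ := (q (2 ^ M)).num.toNat / (q (2 ^ M)).den with hr
  have : 0 ≤ r := by positivity
  have hZr : |Z - r| ≤ |Z - q (2 ^ M)| := by
    rw [hr, toNat_num_div_den]
    conv_lhs => rw [← max_eq_left hZ0]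
    exact abs_max_sub_max_le_abs _ _ _
  have hZq : |Z - r| * 2 ^ M ≤ 1 := by
    have h := (hZr.trans_lt (hqZ (2 ^ M) Nat.one_le_two_pow)).le
    push_cast at h
    rwa [le_div_iff₀ (by positivity)] at h
  have hfloor : (((q (2 ^ M)).num.toNat * 2 ^ M / (q (2 ^ M)).den : ℕ) : ℝ) = ⌊r * 2 ^ M⌋₊ := by
    rw [hr, div_mul_eq_mul_div, ← Nat.floor_div_eq_div (K := ℝ)]
    push_cast
    rfl
  have hround : |r * 2 ^ M - ⌊r * 2 ^ M⌋₊| ≤ 1 :=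
    abs_le.2 ⟨by linarith [Nat.floor_le (show 0 ≤ r * 2 ^ M by positivity)],
      by linarith [Nat.lt_floor_add_one (r * 2 ^ M)]⟩
  calc |Z * 2 ^ M - ((q (2 ^ M)).num.toNat * 2 ^ M / (q (2 ^ M)).den : ℕ)|
      = |(Z - r) * 2 ^ M + (r * 2 ^ M - ⌊r * 2 ^ M⌋₊)| := by rw [hfloor]; ring_nf
    _ ≤ |Z - r| * 2 ^ M + |r * 2 ^ M - ⌊r * 2 ^ M⌋₊| := by
      refine (abs_add_le _ _).trans_eq ?_
      rw [abs_mul, abs_of_pos (show (0 : ℝ) < 2 ^ M by positivity)]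
    _ ≤ (2 : ℕ) := by push_cast; linarith

end DyadicComputable

end ComputableReals

/-! ### Finite partition sums -/

section PartitionSums

theorem two_rpow_neg_div_mono {x s t : ℝ} (hx : 0 ≤ x) (hs : 0 < s) (hst : s ≤ t) :
    (2 : ℝ) ^ (-x / s) ≤ 2 ^ (-x / t) := by
  refine Real.rpow_le_rpow_of_exponent_le one_le_two ?_
  rw [neg_div, neg_div, neg_le_neg_iff]
  gcongr

theorem two_rpow_neg_div_eq_mul_exp (x s t : ℝ) :
    (2 : ℝ) ^ (-x / t) = 2 ^ (-x / s) * Real.exp (x * (1 / s - 1 / t) * Real.log 2) := by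
  rw [Real.rpow_def_of_pos two_pos, Real.rpow_def_of_pos two_pos, ← Real.exp_add]
  ring_nf

-- With `u = x (1/t - 1) log 2`, the left side is at most `2 ^ (-x) * exp (-u) * u * c`, where
-- `c = (t - s) / (s (1 - t))`, and `u * exp (-u) ≤ 1`.
theorem two_rpow_neg_div_sub_le (x : ℝ) {s t : ℝ} (hs : 0 < s) (hst : s ≤ t) (ht : t < 1) :
    (2 : ℝ) ^ (-x / t) - 2 ^ (-x / s) ≤ 2 ^ (-x) * ((t - s) / (s * (1 - t))) := by
  have ht₀ : 0 < t := hs.trans_le hst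
  have ht₁ : 0 < 1 - t := sub_pos.2 ht
  have hc : 0 ≤ (t - s) / (s * (1 - t)) := div_nonneg (sub_nonneg.2 hst) (by positivity)
  set u := x * (1 / t - 1) * Real.log 2 with hu
  have hy : x * (1 / t - 1 / s) * Real.log 2 = -(u * ((t - s) / (s * (1 - t)))) := by
    rw [hu]; field_simp; ring
  have hut : (2 : ℝ) ^ (-x / t) = 2 ^ (-x) * Real.exp (-u) := by
    rw [two_rpow_neg_div_eq_mul_exp x 1 t, div_one, hu]; ring_nf
  have hu_exp : Real.exp (-u) * u ≤ 1 := by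
    rw [Real.exp_neg, inv_mul_le_iff₀ (Real.exp_pos u)]
    linarith [Real.add_one_le_exp u]
  calc (2 : ℝ) ^ (-x / t) - 2 ^ (-x / s)
      = 2 ^ (-x / t) * (1 - Real.exp (-(u * ((t - s) / (s * (1 - t)))))) := by
        rw [two_rpow_neg_div_eq_mul_exp x t s, hy]; ring
    _ ≤ 2 ^ (-x / t) * (u * ((t - s) / (s * (1 - t)))) := by
        gcongr
        linarith [Real.add_one_le_exp (-(u * ((t - s) / (s * (1 - t)))))]
    _ = 2 ^ (-x) * (Real.exp (-u) * u * ((t - s) / (s * (1 - t)))) := by rw [hut]; ring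
    _ ≤ 2 ^ (-x) * ((t - s) / (s * (1 - t))) := by
        gcongr
        exact mul_le_of_le_one_left hc hu_exp

theorem mul_sub_le_two_rpow_neg_div_sub {x s t : ℝ} (hx : 1 ≤ x) (hs : 0 < s) (hst : s ≤ t)
    (ht : t ≤ 1) :
    (2 : ℝ) ^ (-x / s) * Real.log 2 * (t - s) ≤ 2 ^ (-x / t) - 2 ^ (-x / s) := by
  have ht₀ : 0 < t := hs.trans_le hst
  have hinv : t - s ≤ 1 / s - 1 / t := by
    rw [div_sub_div _ _ hs.ne' ht₀.ne', one_mul, mul_one]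
    exact le_div_self (sub_nonneg.2 hst) (by positivity) (mul_le_one₀ (hst.trans ht) ht₀.le ht)
  have hexp : (t - s) * Real.log 2 + 1 ≤ Real.exp (x * (1 / s - 1 / t) * Real.log 2) := by
    refine le_trans ?_ (Real.add_one_le_exp _)
    gcongr
    exact hinv.trans (le_mul_of_one_le_left ((sub_nonneg.2 hst).trans hinv) hx)
  rw [two_rpow_neg_div_eq_mul_exp x s t]
  linear_combination (2 : ℝ) ^ (-x / s) * hexp

/-- The sum `∑ 2 ^ (-|p| / t)` over a finite set of programs; for the programs that have halted so
far, it is a lower approximation of the partition function `Z(t)`. -/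
noncomputable def partitionSum (A : Finset (List Bool)) (t : ℝ) : ℝ :=
  ∑ p ∈ A, (2 : ℝ) ^ (-(p.length : ℝ) / t)

variable {A : Finset (List Bool)} {s t : ℝ}

theorem partitionSum_mono_set {B : Finset (List Bool)} (h : A ⊆ B) (t : ℝ) :
    partitionSum A t ≤ partitionSum B t :=
  Finset.sum_le_sum_of_subset_of_nonneg h fun _ _ _ => by positivity

theorem partitionSum_mono (A : Finset (List Bool)) (hs : 0 < s) (hst : s ≤ t) :
    partitionSum A s ≤ partitionSum A t :=
  Finset.sum_le_sum fun _ _ => two_rpow_neg_div_mono (Nat.cast_nonneg _) hs hst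

theorem PrefixFree.mono {D E : Set (List Bool)} (hE : PrefixFree E) (h : D ⊆ E) : PrefixFree D :=
  fun p hp q hq => hE p (h hp) q (h hq)

theorem PrefixFree.uniquelyDecodable {D : Set (List Bool)} (hD : PrefixFree D) (hnil : [] ∉ D) :
    InformationTheory.UniquelyDecodable D := by
  intro L₁
  induction L₁ with
  | nil =>
    rintro (_ | ⟨b, L₂⟩) - h₂ h
    · rfl
    · exact absurd (h₂ b List.mem_cons_self) ((List.append_eq_nil_iff.1 h.symm).1 ▸ hnil)
  | cons a L₁ ih =>
    rintro (_ | ⟨b, L₂⟩) h₁ h₂ h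
    · exact absurd (h₁ a List.mem_cons_self) ((List.append_eq_nil_iff.1 h).1 ▸ hnil)
    · have ha := h₁ a List.mem_cons_self
      have hb := h₂ b List.mem_cons_self
      rw [List.flatten_cons, List.flatten_cons] at h
      obtain rfl : a = b := by
        have hprefix : a <+: b ++ L₂.flatten := h ▸ List.prefix_append a _
        rcases List.prefix_or_prefix_of_prefix hprefix (List.prefix_append b _) with hab | hba
        · exact hD a ha b hb hab
        · exact (hD b hb a ha hba).symm
      rw [ih L₂ (fun w hw => h₁ w (List.mem_cons_of_mem _ hw))
        (fun w hw => h₂ w (List.mem_cons_of_mem _ hw)) (List.append_cancel_left h)]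

theorem two_rpow_neg_length (p : List Bool) : (2 : ℝ) ^ (-(p.length : ℝ)) = (1 / 2) ^ p.length := by
  rw [Real.rpow_neg two_pos.le, Real.rpow_natCast, one_div, inv_pow]

theorem PrefixFree.partitionSum_one_le (hA : PrefixFree (A : Set (List Bool))) :
    partitionSum A 1 ≤ 1 := by
  simp only [partitionSum, div_one, two_rpow_neg_length]
  by_cases hnil : [] ∈ A
  · have : A = {[]} := Finset.eq_singleton_iff_unique_mem.2
      ⟨hnil, fun p hp => (hA [] hnil p hp List.nil_prefix).symm⟩
    simp [this]
  · simpa using InformationTheory.kraft_mcmillan_inequality (hA.uniquelyDecodable hnil)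

theorem partitionSum_le_rpow {T δ : ℝ} (hT₀ : 0 < T) (hT₁ : T ≤ 1) (h : partitionSum A 1 ≤ δ) :
    partitionSum A T ≤ δ ^ (1 / T) := by
  simp only [partitionSum, div_one] at h
  have hexponent : 0 ≤ 1 / T - 1 := sub_nonneg.2 (one_le_one_div hT₀ hT₁)
  have hδ : 0 ≤ δ := (Finset.sum_nonneg fun _ _ => by positivity).trans h
  have hsplit {x : ℝ} (hx : 0 ≤ x) : x ^ (1 / T) = x * x ^ (1 / T - 1) := by
    conv_rhs => enter [1]; rw [← Real.rpow_one x]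
    rw [← Real.rpow_add_of_nonneg hx zero_le_one hexponent, add_sub_cancel]
  calc partitionSum A T
      = ∑ p ∈ A, (2 : ℝ) ^ (-(p.length : ℝ)) * (2 ^ (-(p.length : ℝ))) ^ (1 / T - 1) :=
        Finset.sum_congr rfl fun p _ => by
          rw [← hsplit (by positivity), ← Real.rpow_mul two_pos.le, mul_one_div]
    _ ≤ ∑ p ∈ A, (2 : ℝ) ^ (-(p.length : ℝ)) * δ ^ (1 / T - 1) := by
        gcongr with p hp
        exact (Finset.single_le_sum (f := fun p : List Bool => (2 : ℝ) ^ (-(p.length : ℝ)))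
          (fun _ _ => by positivity) hp).trans h
    _ ≤ δ ^ (1 / T) := by
        rw [← Finset.sum_mul, hsplit hδ]
        gcongr

theorem PrefixFree.partitionSum_sub_le (hA : PrefixFree (A : Set (List Bool))) (hs : 0 < s)
    (hst : s ≤ t) (ht : t < 1) :
    partitionSum A t - partitionSum A s ≤ (t - s) / (s * (1 - t)) := by
  have hc : 0 ≤ (t - s) / (s * (1 - t)) :=
    div_nonneg (sub_nonneg.2 hst) (mul_nonneg hs.le (sub_nonneg.2 ht.le))
  calc partitionSum A t - partitionSum A s
      ≤ ∑ p ∈ A, (2 : ℝ) ^ (-(p.length : ℝ)) * ((t - s) / (s * (1 - t))) := by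
        rw [partitionSum, partitionSum, ← Finset.sum_sub_distrib]
        exact Finset.sum_le_sum fun p _ => two_rpow_neg_div_sub_le _ hs hst ht
    _ = partitionSum A 1 * ((t - s) / (s * (1 - t))) := by
        simp only [partitionSum, div_one, Finset.sum_mul]
    _ ≤ (t - s) / (s * (1 - t)) := mul_le_of_le_one_left hc hA.partitionSum_one_le

theorem mul_sub_le_partitionSum_sub {p : List Bool} (hp : p ∈ A) (hnil : p ≠ []) (hs : 0 < s)
    (hst : s ≤ t) (ht : t ≤ 1) :
    (2 : ℝ) ^ (-(p.length : ℝ) / s) * Real.log 2 * (t - s) ≤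
      partitionSum A t - partitionSum A s := by
  have hlength : (1 : ℝ) ≤ p.length := by exact_mod_cast List.length_pos_iff.2 hnil
  rw [partitionSum, partitionSum, ← Finset.sum_sub_distrib]
  exact (mul_sub_le_two_rpow_neg_div_sub hlength hs hst ht).trans
    (Finset.single_le_sum (f := fun q : List Bool =>
      (2 : ℝ) ^ (-(q.length : ℝ) / t) - 2 ^ (-(q.length : ℝ) / s))
      (fun q _ => sub_nonneg.2 (two_rpow_neg_div_mono (Nat.cast_nonneg _) hs hst)) hp)

end PartitionSums

/-! ### Optimal computers -/

section OptimalComputers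

variable {U : Computer}

theorem H_le_length {s p : List Bool} (h : s ∈ U.f p) : H U s ≤ p.length :=
  Nat.sInf_le ⟨p, rfl, h⟩

theorem IsOptimal.exists_program_of_rePred (hU : IsOptimal U) {α : Type*} [Primcodable α]
    {R : List Bool → α → Prop} (hR : REPred fun x : List Bool × α => R x.1 x.2)
    (hprefix : PrefixFree {p | ∃ x, R p x}) {g : α → List Bool} (hg : Computable g) :
    ∃ d : ℕ, ∀ p x, R p x → ∃ x' p', R p x' ∧ g x' ∈ U.f p' ∧ p'.length ≤ p.length + d := by
  obtain ⟨f, hf, hfR, hf_dom⟩ := exists_partrec_selector hR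
  obtain ⟨d, hd⟩ := hU
    { f := fun p => (f p).map g
      partrec := hf.map (hg.comp Computable.snd)
      prefixFree := hprefix.mono fun p (hp : (f p).Dom) =>
        ⟨(f p).get hp, hfR p _ (Part.get_mem hp)⟩ }
  refine ⟨d, fun p x hx => ?_⟩
  have hdom := hf_dom p x hx
  obtain ⟨p', hp', hsim⟩ := hd p hdom
  exact ⟨(f p).get hdom, p', hfR p _ (Part.get_mem hdom),
    hsim _ (Part.mem_map g (Part.get_mem hdom)), hp'⟩

theorem IsOptimal.exists_H_le_of_rePred (hU : IsOptimal U) {α : Type*} [Primcodable α]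
    {R : List Bool → α → Prop} (hR : REPred fun x : List Bool × α => R x.1 x.2)
    (hprefix : PrefixFree {p | ∃ x, R p x}) {g : α → List Bool} (hg : Computable g) :
    ∃ d : ℕ, ∀ p x, R p x → ∃ x', R p x' ∧ H U (g x') ≤ p.length + d := by
  obtain ⟨d, hd⟩ := hU.exists_program_of_rePred hR hprefix hg
  refine ⟨d, fun p x hx => ?_⟩
  obtain ⟨x', p', hx', hp', hlength⟩ := hd p x hx
  exact ⟨x', hx', (H_le_length hp').trans hlength⟩

theorem IsOptimal.exists_mem (hU : IsOptimal U) (s : List Bool) : ∃ p, s ∈ U.f p := by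
  have hR : REPred fun x : List Bool × Unit => x.1 = [] :=
    rePred_eq Computable.fst (Computable.const [])
  have hprefix : PrefixFree {p | ∃ _ : Unit, p = []} :=
    fun p ⟨_, hp⟩ q ⟨_, hq⟩ _ => hp.trans hq.symm
  obtain ⟨d, hd⟩ := hU.exists_program_of_rePred (R := fun p _ => p = []) hR hprefix
    (Computable.const s)
  obtain ⟨-, p, -, hp, -⟩ := hd [] () rfl
  exact ⟨p, hp⟩

theorem IsOptimal.exists_mem_length_eq_H (hU : IsOptimal U) (s : List Bool) :
    ∃ p, s ∈ U.f p ∧ p.length = H U s := by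
  obtain ⟨p, hp⟩ := hU.exists_mem s
  obtain ⟨q, hq, hs⟩ := Nat.sInf_mem (s := {n | ∃ p : List Bool, p.length = n ∧ s ∈ U.f p})
    ⟨_, p, rfl, hp⟩
  exact ⟨q, hs, hq⟩

theorem IsOptimal.nil_notMem_domain (hU : IsOptimal U) : [] ∉ U.domain := fun hnil => by
  have hmem_nil {s p : List Bool} (hp : s ∈ U.f p) : s ∈ U.f [] := by
    rwa [U.prefixFree [] hnil p (Part.dom_iff_mem.2 ⟨s, hp⟩) List.nil_prefix]
  obtain ⟨p, hp⟩ := hU.exists_mem []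
  obtain ⟨q, hq⟩ := hU.exists_mem [true]
  exact List.cons_ne_nil _ _ (Part.mem_unique (hmem_nil hq) (hmem_nil hp))

end OptimalComputers

/-! ### Halting stages -/

namespace Computer

variable (U : Computer) {k l : ℕ} {p s : List Bool} {t T : ℝ}

/-- The output of `U` on `p`, if it is found within `k` steps of the interpreter
`Nat.Partrec.Code.evaln`, run on a code for `U` that is fixed once and for all. -/
noncomputable def evaln (k : ℕ) (p : List Bool) : Option (List Bool) :=
  ((Nat.Partrec.Code.exists_code.1 U.partrec).choose.evaln k (Encodable.encode p)).bind
    Encodable.decode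

theorem primrec_evaln : Primrec₂ U.evaln :=
  Primrec.option_bind (Nat.Partrec.Code.primrec_evaln.comp
    (Primrec.pair (Primrec.pair Primrec.fst (Primrec.const _))
      (Primrec.encode.comp Primrec.snd))) (Primrec.decode.comp Primrec.snd)

theorem mem_f_iff_exists_evaln : s ∈ U.f p ↔ ∃ k, U.evaln k p = some s := by
  have hcode := (Nat.Partrec.Code.exists_code.1 U.partrec).choose_spec
  have heval (n : ℕ) : n ∈ (Nat.Partrec.Code.exists_code.1 U.partrec).choose.eval
      (Encodable.encode p) ↔ ∃ s ∈ U.f p, Encodable.encode s = n := by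
    rw [hcode]
    simp [Encodable.encodek, Part.mem_map_iff]
  simp only [evaln, Option.bind_eq_some_iff]
  constructor
  · intro hs
    obtain ⟨k, hk⟩ := Nat.Partrec.Code.evaln_complete.1 ((heval _).2 ⟨s, hs, rfl⟩)
    exact ⟨k, _, hk, Encodable.encodek s⟩
  · rintro ⟨k, n, hn, hs⟩
    obtain ⟨s', hs', rfl⟩ := (heval n).1 (Nat.Partrec.Code.evaln_sound hn)
    obtain rfl : s' = s := Option.some_injective _ ((Encodable.encodek s').symm.trans hs)
    exact hs'

variable {U}

theorem evaln_mono (hkl : k ≤ l) (h : U.evaln k p = some s) : U.evaln l p = some s := by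
  rw [evaln, Option.bind_eq_some_iff] at h ⊢
  obtain ⟨n, hn, hs⟩ := h
  exact ⟨n, Nat.Partrec.Code.evaln_mono hkl hn, hs⟩

variable (U)

/-- The programs with code below `k` that `U` runs to completion within `k` steps: a uniformly
computable increasing enumeration of the domain of `U` by finite stages. -/
noncomputable def stage (k : ℕ) : List (List Bool) :=
  ((List.range k).filterMap (Encodable.decode₂ (List Bool))).filter fun p => (U.evaln k p).isSome

theorem mem_stage : p ∈ U.stage k ↔ Encodable.encode p < k ∧ ∃ s, U.evaln k p = some s := by
  have hdecode (n : ℕ) : Encodable.decode₂ (List Bool) n = some p ↔ Encodable.encode p = n :=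
    Encodable.mem_decode₂
  simp [stage, hdecode, Option.isSome_iff_exists]

theorem nodup_stage (k : ℕ) : (U.stage k).Nodup :=
  (List.Nodup.filterMap (fun _ _ _ hm hn => (Encodable.mem_decode₂.1 hm).symm.trans
    (Encodable.mem_decode₂.1 hn)) List.nodup_range).filter _

theorem primrec_stage : Primrec U.stage := by
  have hdecode : Primrec₂ fun (_ n : ℕ) => Encodable.decode₂ (List Bool) n :=
    Primrec.decode₂.comp Primrec.snd
  have hcond : Primrec₂ fun k p => bif (U.evaln k p).isSome then some p else none :=
    Primrec.cond (Primrec.option_isSome.comp U.primrec_evaln)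
      (Primrec.option_some.comp Primrec.snd) (Primrec.const none)
  refine (Primrec.listFilterMap (Primrec.listFilterMap Primrec.list_range
    hdecode) hcond).of_eq fun k => ?_
  rw [stage, ← List.filterMap_eq_filter]
  simp only [cond_eq_ite, Option.guard]

theorem stage_mono (hkl : k ≤ l) : (U.stage k).toFinset ⊆ (U.stage l).toFinset := fun p hp => by
  rw [List.mem_toFinset, mem_stage] at hp ⊢
  exact ⟨hp.1.trans_le hkl, hp.2.imp fun _ => evaln_mono hkl⟩

theorem stage_subset_domain (k : ℕ) : ((U.stage k).toFinset : Set (List Bool)) ⊆ U.domain :=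
  fun p hp => by
    rw [Finset.mem_coe, List.mem_toFinset, mem_stage] at hp
    obtain ⟨-, s, hs⟩ := hp
    exact Part.dom_iff_mem.2 ⟨s, U.mem_f_iff_exists_evaln.2 ⟨k, hs⟩⟩

theorem exists_mem_stage (hp : p ∈ U.domain) : ∃ k, p ∈ U.stage k := by
  obtain ⟨s, hs⟩ := Part.dom_iff_mem.1 hp
  obtain ⟨k, hk⟩ := U.mem_f_iff_exists_evaln.1 hs
  exact ⟨max k (Encodable.encode p + 1), U.mem_stage.2 ⟨by omega, s,
    evaln_mono (le_max_left _ _) hk⟩⟩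

theorem prefixFree_stage (k : ℕ) : PrefixFree ((U.stage k).toFinset : Set (List Bool)) :=
  PrefixFree.mono U.prefixFree (U.stage_subset_domain k)

/-- A string longer than every output produced at stage `k`. -/
noncomputable def fresh (k : ℕ) : List Bool :=
  true :: ((U.stage k).filterMap (U.evaln k)).flatten

theorem primrec_fresh : Primrec U.fresh :=
  Primrec.list_cons.comp (Primrec.const true)
    (Primrec.list_flatten.comp (Primrec.listFilterMap U.primrec_stage U.primrec_evaln))

theorem notMem_stage_of_fresh_mem (hp : U.fresh k ∈ U.f p) : p ∉ U.stage k := fun hmem => by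
  obtain ⟨-, s, hs⟩ := U.mem_stage.1 hmem
  obtain rfl : s = U.fresh k := Part.mem_unique (U.mem_f_iff_exists_evaln.2 ⟨k, hs⟩) hp
  have hlength := (List.sublist_flatten_of_mem
    (List.mem_filterMap.2 ⟨p, hmem, hs⟩)).length_le
  rw [fresh, List.length_cons] at hlength
  exact absurd hlength (Nat.not_succ_le_self _)

/-- The lower approximation of the partition function by the programs of stage `k`. -/
noncomputable def stageSum (k : ℕ) (t : ℝ) : ℝ := partitionSum (U.stage k).toFinset t

/-- The partition function `Z(t) = ∑ 2 ^ (-|p| / t)`. -/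
noncomputable def partitionFunction (t : ℝ) : ℝ := ∑' p, zterm U t p

theorem stageSum_mono_left (t : ℝ) : Monotone fun k => U.stageSum k t :=
  fun _ _ hkl => partitionSum_mono_set (U.stage_mono hkl) t

theorem summable_zterm (ht₀ : 0 < t) (ht₁ : t ≤ 1) : Summable (zterm U t) := by
  refine summable_of_sum_le (c := 1) (fun p => by unfold zterm; positivity) fun u => ?_
  calc ∑ p ∈ u, zterm U t p = partitionSum (u.map (.subtype _)) t := by
        rw [partitionSum, Finset.sum_map]; rfl
    _ ≤ partitionSum (u.map (.subtype _)) 1 := partitionSum_mono _ ht₀ ht₁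
    _ ≤ 1 := PrefixFree.partitionSum_one_le <| PrefixFree.mono U.prefixFree fun p hp => by
        obtain ⟨q, -, rfl⟩ := Finset.mem_map.1 (Finset.mem_coe.1 hp)
        exact q.2

theorem tendsto_stageSum (ht₀ : 0 < t) (ht₁ : t ≤ 1) :
    Tendsto (fun k => U.stageSum k t) atTop (nhds (U.partitionFunction t)) := by
  classical
  have hexhaust : Tendsto (fun k => (U.stage k).toFinset.subtype (· ∈ U.domain)) atTop atTop := by
    refine tendsto_atTop_finset_of_monotone (fun k l hkl p hp => ?_) fun p => ?_
    · rw [Finset.mem_subtype] at hp ⊢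
      exact U.stage_mono hkl hp
    · simpa using U.exists_mem_stage p.2
  refine ((U.summable_zterm ht₀ ht₁).hasSum.comp hexhaust).congr fun k => ?_
  exact Finset.sum_subtype_of_mem (fun p : List Bool => (2 : ℝ) ^ (-(p.length : ℝ) / t))
    fun p hp => U.stage_subset_domain k hp

theorem stageSum_le (ht₀ : 0 < t) (ht₁ : t ≤ 1) (k : ℕ) :
    U.stageSum k t ≤ U.partitionFunction t :=
  (U.stageSum_mono_left t).ge_of_tendsto (U.tendsto_stageSum ht₀ ht₁) k

theorem partitionFunction_nonneg (t : ℝ) : 0 ≤ U.partitionFunction t :=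
  tsum_nonneg fun p => by unfold zterm; positivity

theorem partitionFunction_one_le : U.partitionFunction 1 ≤ 1 :=
  le_of_tendsto' (U.tendsto_stageSum one_pos le_rfl) fun k =>
    (U.prefixFree_stage k).partitionSum_one_le

theorem stageSum_sub (hkl : k ≤ l) (t : ℝ) :
    U.stageSum l t - U.stageSum k t =
      partitionSum ((U.stage l).toFinset \ (U.stage k).toFinset) t :=
  (Finset.sum_sdiff_eq_sub (U.stage_mono hkl)).symm

theorem partitionFunction_sub_le_rpow {δ : ℝ} (hT₀ : 0 < T) (hT₁ : T ≤ 1)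
    (h : U.partitionFunction 1 - U.stageSum k 1 ≤ δ) :
    U.partitionFunction T - U.stageSum k T ≤ δ ^ (1 / T) := by
  refine le_of_tendsto ((U.tendsto_stageSum hT₀ hT₁).sub_const (U.stageSum k T)) ?_
  filter_upwards [eventually_ge_atTop k] with l hkl
  rw [U.stageSum_sub hkl]
  refine partitionSum_le_rpow hT₀ hT₁ ?_
  rw [← U.stageSum_sub hkl]
  linarith [U.stageSum_le one_pos le_rfl l]

theorem two_rpow_le_partitionFunction_sub (hT₀ : 0 < T) (hT₁ : T ≤ 1) (hp : p ∈ U.domain)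
    (hk : p ∉ U.stage k) :
    (2 : ℝ) ^ (-(p.length : ℝ) / T) ≤ U.partitionFunction T - U.stageSum k T := by
  obtain ⟨l, hl⟩ := U.exists_mem_stage hp
  have hmem : p ∈ (U.stage (max k l)).toFinset \ (U.stage k).toFinset :=
    Finset.mem_sdiff.2 ⟨U.stage_mono (le_max_right k l) (List.mem_toFinset.2 hl),
      mt List.mem_toFinset.1 hk⟩
  calc (2 : ℝ) ^ (-(p.length : ℝ) / T)
      ≤ partitionSum ((U.stage (max k l)).toFinset \ (U.stage k).toFinset) T :=
        Finset.single_le_sum (f := fun q : List Bool => (2 : ℝ) ^ (-(q.length : ℝ) / T))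
          (fun _ _ => by positivity) hmem
    _ = U.stageSum (max k l) T - U.stageSum k T := (U.stageSum_sub (le_max_left k l) T).symm
    _ ≤ U.partitionFunction T - U.stageSum k T := by gcongr; exact U.stageSum_le hT₀ hT₁ _

end Computer

/-! ### Computability of partition sums -/

section ComputabilityOfSums

theorem primrec_list_sum : Primrec (List.sum : List ℕ → ℕ) :=
  Primrec.list_foldr (h := fun _ (p : ℕ × ℕ) => p.1 + p.2) Primrec.id (Primrec.const 0)
    (Primrec.nat_add.comp (Primrec.fst.comp Primrec.snd) (Primrec.snd.comp Primrec.snd))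

theorem primrec_nat_floor {α : Type*} [Primcodable α] {f : α → ℝ} {B : α → ℕ} (hB : Primrec B)
    (hf₀ : ∀ a, 0 ≤ f a) (hfB : ∀ a, f a ≤ B a)
    (hf : PrimrecRel fun a (n : ℕ) => (n : ℝ) ≤ f a) : Primrec fun a => ⌊f a⌋₊ := by
  classical
  refine (Primrec.nat_findGreatest hB hf).of_eq fun a => Nat.findGreatest_eq_iff.2
    ⟨Nat.floor_le_of_le (hfB a), fun _ => Nat.floor_le (hf₀ a), fun n hn _ => ?_⟩
  exact not_le.2 ((Nat.floor_lt (hf₀ a)).1 hn)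

theorem natCast_le_two_pow_mul_rpow_iff {l a b M c : ℕ} (ha : a ≠ 0) :
    (c : ℝ) ≤ 2 ^ M * 2 ^ (-(l : ℝ) / ((a : ℝ) / b)) ↔ c ^ a * 2 ^ (l * b) ≤ 2 ^ (M * a) := by
  set x : ℝ := 2 ^ M * 2 ^ (-(l : ℝ) / ((a : ℝ) / b)) with hx
  have hx_pow : x ^ a * 2 ^ (l * b) = 2 ^ (M * a) := by
    have hexponent : -(l : ℝ) / ((a : ℝ) / b) * a + ((l * b : ℕ) : ℝ) = 0 := by
      rw [div_div_eq_mul_div]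
      push_cast
      field_simp
      ring
    rw [hx, mul_pow, ← pow_mul, mul_assoc, ← Real.rpow_mul_natCast two_pos.le,
      ← Real.rpow_natCast 2 (l * b), ← Real.rpow_add two_pos, hexponent, Real.rpow_zero, mul_one]
  rw [← pow_le_pow_iff_left₀ (Nat.cast_nonneg c) (by positivity) ha,
    ← mul_le_mul_iff_left₀ (show (0 : ℝ) < 2 ^ (l * b) by positivity), hx_pow]
  norm_cast

theorem primrec_floor_two_pow_mul_rpow : Primrec fun x : ℕ × ℕ × ℕ × ℕ =>
    ⌊(2 : ℝ) ^ x.2.2.2 * 2 ^ (-(x.1 : ℝ) / (((x.2.1 + 1 : ℕ) : ℝ) / x.2.2.1))⌋₊ := by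
  have ha := Primrec.fst.comp (Primrec.snd (α := ℕ) (β := ℕ × ℕ × ℕ))
  have hbM := Primrec.snd.comp (Primrec.snd (α := ℕ) (β := ℕ × ℕ × ℕ))
  have hb := Primrec.fst.comp hbM
  have hM := Primrec.snd.comp hbM
  have htwo_pow {α : Type} [Primcodable α] {n : α → ℕ} (hn : Primrec n) :
      Primrec fun x => 2 ^ n x := primrec_nat_pow.comp (Primrec.const 2) hn
  refine primrec_nat_floor (htwo_pow hM) (fun x => by positivity) (fun x => ?_) ?_
  · rw [Nat.cast_pow, Nat.cast_ofNat]
    refine mul_le_of_le_one_right (by positivity)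
      (Real.rpow_le_one_of_one_le_of_nonpos one_le_two ?_)
    rw [neg_div, neg_nonpos]
    positivity
  · refine (Primrec.nat_le.comp
      (Primrec.nat_mul.comp
        (primrec_nat_pow.comp Primrec.snd (Primrec.succ.comp (ha.comp Primrec.fst)))
        ((htwo_pow (Primrec.nat_mul.comp Primrec.fst hb)).comp Primrec.fst))
      ((htwo_pow (Primrec.nat_mul.comp hM (Primrec.succ.comp ha))).comp Primrec.fst)).of_eq
        fun x => (natCast_le_two_pow_mul_rpow_iff (Nat.succ_ne_zero x.1.2.1)).symm

theorem abs_sum_sub_sum_floor_le {ι : Type*} (A : Finset ι) {f : ι → ℝ} (hf : ∀ i, 0 ≤ f i) :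
    |∑ i ∈ A, f i - (∑ i ∈ A, ⌊f i⌋₊ : ℕ)| ≤ A.card := by
  push_cast
  rw [← Finset.sum_sub_distrib]
  refine (Finset.abs_sum_le_sum_abs _ _).trans ((Finset.sum_le_card_nsmul A _ 1 fun i _ => ?_).trans
    (nsmul_one _).le)
  rw [abs_le]
  constructor <;> linarith [Nat.floor_le (hf i), Nat.lt_floor_add_one (f i)]

theorem dyadicComputable_partitionSum {α : Type*} [Primcodable α] {L : α → List (List Bool)}
    (hL : Primrec L) (hnodup : ∀ x, (L x).Nodup) :
    DyadicComputable fun x : α × ℕ × ℕ =>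
      partitionSum (L x.1).toFinset (((x.2.1 + 1 : ℕ) : ℝ) / x.2.2) := by
  have hL' : Primrec fun x : α × ℕ × ℕ => L x.1 := hL.comp Primrec.fst
  have hterm : Primrec₂ fun (y : (α × ℕ × ℕ) × ℕ) (p : List Bool) =>
      ⌊(2 : ℝ) ^ y.2 * 2 ^ (-(p.length : ℝ) / (((y.1.2.1 + 1 : ℕ) : ℝ) / y.1.2.2))⌋₊ :=
    primrec_floor_two_pow_mul_rpow.comp ((Primrec.list_length.comp Primrec.snd).pair
      ((Primrec.fst.comp (Primrec.snd.comp (Primrec.fst.comp Primrec.fst))).pair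
        ((Primrec.snd.comp (Primrec.snd.comp (Primrec.fst.comp Primrec.fst))).pair
          (Primrec.snd.comp Primrec.fst))))
  refine ⟨_, _, (primrec_list_sum.comp (Primrec.list_map (hL'.comp Primrec.fst) hterm)).to_comp.to₂,
    (Primrec.list_length.comp hL').to_comp, fun x M => ?_⟩
  have h := abs_sum_sub_sum_floor_le (L x.1).toFinset fun p : List Bool => show
    0 ≤ (2 : ℝ) ^ M * 2 ^ (-(p.length : ℝ) / (((x.2.1 + 1 : ℕ) : ℝ) / x.2.2)) by positivity
  rwa [← Finset.mul_sum, mul_comm, List.sum_toFinset (M := ℕ) _ (hnodup x.1),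
    List.toFinset_card_of_nodup (hnodup x.1)] at h

theorem Computer.dyadicComputable_stageSum (U : Computer) :
    DyadicComputable fun x : ℕ × ℕ × ℕ => U.stageSum x.1 (((x.2.1 + 1 : ℕ) : ℝ) / x.2.2) :=
  dyadicComputable_partitionSum U.primrec_stage U.nodup_stage

end ComputabilityOfSums

/-! ### Right-computability of the temperature -/

section Temperature

variable {U : Computer} {T t : ℝ} {k : ℕ}

theorem Computer.lt_of_partitionFunction_lt_stageSum (ht : 0 < t) (hT₁ : T ≤ 1)
    (h : U.partitionFunction T < U.stageSum k t) : T < t := by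
  by_contra! htT
  exact h.not_ge ((partitionSum_mono _ ht htT).trans (U.stageSum_le (ht.trans_le htT) hT₁ k))

theorem IsOptimal.exists_mul_sub_le_stageSum_sub (hU : IsOptimal U) (hT₀ : 0 < T) :
    ∃ c : ℝ, 0 < c ∧ ∃ k₀, ∀ k ≥ k₀, ∀ t, T ≤ t → t ≤ 1 →
      c * (t - T) ≤ U.stageSum k t - U.stageSum k T := by
  obtain ⟨p, hp⟩ := hU.exists_mem []
  have hdomain : p ∈ U.domain := Part.dom_iff_mem.2 ⟨_, hp⟩
  have hnil : p ≠ [] := fun h => hU.nil_notMem_domain (h ▸ hdomain)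
  obtain ⟨k₀, hk₀⟩ := U.exists_mem_stage hdomain
  exact ⟨(2 : ℝ) ^ (-(p.length : ℝ) / T) * Real.log 2, by positivity, k₀, fun k hk t hTt ht =>
    mul_sub_le_partitionSum_sub (U.stage_mono hk (List.mem_toFinset.2 hk₀)) hnil hT₀ hTt ht⟩

theorem IsOptimal.eventually_partitionFunction_lt_stageSum (hU : IsOptimal U) (hT₀ : 0 < T)
    (hT₁ : T < 1) (hTt : T < t) : ∀ᶠ k in atTop, U.partitionFunction T < U.stageSum k t := by
  wlog ht : t ≤ 1 generalizing t
  · filter_upwards [this hT₁ le_rfl] with k hk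
    exact hk.trans_le (partitionSum_mono _ one_pos (not_le.1 ht).le)
  obtain ⟨c, hc, k₀, hk₀⟩ := hU.exists_mul_sub_le_stageSum_sub hT₀
  have hlim := U.tendsto_stageSum (hT₀.trans hTt) ht
  have hgap : c * (t - T) ≤ U.partitionFunction t - U.partitionFunction T :=
    ge_of_tendsto (hlim.sub (U.tendsto_stageSum hT₀ hT₁.le)) <|
      (eventually_ge_atTop k₀).mono fun k hk => hk₀ k hk t hTt.le ht
  refine hlim.eventually_const_lt ?_
  linarith [mul_pos hc (sub_pos.2 hTt)]

theorem Computer.rePred_partitionFunction_lt_stageSum {α : Type*} [Primcodable α]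
    (hZ : ComputableReal (U.partitionFunction T)) {f g h : α → ℕ} (hf : Computable f)
    (hg : Computable g) (hh : Computable h) : REPred fun x =>
      U.partitionFunction T < U.stageSum (f x) (((g x + 1 : ℕ) : ℝ) / h x) := by
  have hsum := U.dyadicComputable_stageSum.comp (hf.pair (hg.pair hh))
  exact (DyadicComputable.const hZ (U.partitionFunction_nonneg T)).rePred_lt hsum

theorem IsOptimal.rightComputable (hU : IsOptimal U) (hT₀ : 0 < T) (hT₁ : T < 1)
    (hZ : ComputableReal (U.partitionFunction T)) : RightComputable T := by
  have hnum : Computable fun q : ℚ => q.num.toNat :=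
    primrec_int_toNat.to_comp.comp computable_rat_num
  have hsum : REPred fun q : ℚ => ∃ k, U.partitionFunction T <
      U.stageSum k (((q.num.toNat - 1 + 1 : ℕ) : ℝ) / q.den) :=
    rePred_exists (R := fun (q : ℚ) k => U.partitionFunction T <
        U.stageSum k (((q.num.toNat - 1 + 1 : ℕ) : ℝ) / q.den))
      (Computer.rePred_partitionFunction_lt_stageSum hZ Computable.snd
        (Primrec.pred.to_comp.comp (hnum.comp Computable.fst))
        (computable_rat_den.comp Computable.fst))
  refine rightComputable_of_rePred_lt ((rePred_and
    (rePred_nat_lt (Computable.const 0) hnum) hsum).of_eq fun q => ?_)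
  have hcast (hq : 0 < q.num.toNat) : ((q.num.toNat - 1 + 1 : ℕ) : ℝ) / q.den = q := by
    rw [Nat.sub_add_cancel hq, toNat_num_div_den (K := ℝ),
      max_eq_left (Rat.cast_nonneg.2 (Rat.num_pos.1 (Int.lt_toNat.1 hq)).le)]
  constructor
  · rintro ⟨hq, k, hk⟩
    rw [hcast hq] at hk
    exact Computer.lt_of_partitionFunction_lt_stageSum
      (Rat.cast_pos.2 (Rat.num_pos.1 (Int.lt_toNat.1 hq))) hT₁.le hk
  · intro hTq
    have hq : 0 < q.num.toNat :=
      Int.lt_toNat.2 (Rat.num_pos.2 (Rat.cast_pos.1 (hT₀.trans hTq)))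
    rw [hcast hq]
    exact ⟨hq, (hU.eventually_partitionFunction_lt_stageSum hT₀ hT₁ hTq).exists⟩

end Temperature

/-! ### Binary expansions -/

section BinaryExpansions

/-- The binary expansion of `v` on `n` bits, most significant bit first. -/
def toBits (n v : ℕ) : List Bool :=
  (List.range n).map fun i => decide (v / 2 ^ (n - 1 - i) % 2 = 1)

theorem computable_toBits : Computable₂ toBits := by
  have hn := Primrec.fst.comp (Primrec.fst (α := ℕ × ℕ) (β := ℕ))
  have hexponent := Primrec.nat_sub.comp (Primrec.nat_sub.comp hn (Primrec.const 1)) Primrec.snd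
  have hbit : Primrec₂ fun (x : ℕ × ℕ) i => decide (x.2 / 2 ^ (x.1 - 1 - i) % 2 = 1) :=
    Primrec.eq.decide.comp (Primrec.nat_mod.comp
      (Primrec.nat_div.comp (Primrec.snd.comp Primrec.fst)
        (primrec_nat_pow.comp (Primrec.const 2) hexponent)) (Primrec.const 2)) (Primrec.const 1)
  exact (Primrec.list_map (Primrec.list_range.comp Primrec.fst) hbit).to_comp

@[simp]
theorem length_toBits (n v : ℕ) : (toBits n v).length = n := by simp [toBits]

theorem toBits_inj {m n v w : ℕ} (hv : v < 2 ^ m) (hw : w < 2 ^ n)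
    (h : toBits m v = toBits n w) : m = n ∧ v = w := by
  obtain rfl : m = n := by simpa using congrArg List.length h
  refine ⟨rfl, Nat.eq_of_testBit_eq fun j => ?_⟩
  rcases lt_or_ge j m with hj | hj
  · have hget := congrArg (·[m - 1 - j]?) h
    simp only [toBits, List.getElem?_map, List.getElem?_range (show m - 1 - j < m by omega),
      Option.map_some, Option.some.injEq, show m - 1 - (m - 1 - j) = j by omega] at hget
    rw [Nat.testBit_eq_decide_div_mod_eq, Nat.testBit_eq_decide_div_mod_eq, hget]
  · have hpow : 2 ^ m ≤ 2 ^ j := Nat.pow_le_pow_right two_pos hj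
    rw [Nat.testBit_lt_two_pow (hv.trans_le hpow), Nat.testBit_lt_two_pow (hw.trans_le hpow)]

variable {T : ℝ}

theorem bits_eq_toBits (hT₀ : 0 ≤ T) (hT₁ : T < 1) (n : ℕ) :
    bits T n = toBits n ⌊T * 2 ^ n⌋₊ := by
  refine List.map_congr_left fun i hi => ?_
  have hi : i < n := List.mem_range.1 hi
  have hfloor : ⌊T * 2 ^ n⌋₊ / 2 ^ (n - 1 - i) = ⌊T * 2 ^ (i + 1)⌋₊ := by
    have hpow : (2 : ℝ) ^ n = 2 ^ (i + 1) * 2 ^ (n - 1 - i) := by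
      rw [← pow_add]
      congr 1
      omega
    rw [← Nat.floor_div_natCast, hpow, ← mul_assoc, Nat.cast_pow, Nat.cast_ofNat,
      mul_div_cancel_right₀ _ (by positivity)]
  rw [binDigit, Int.fract_eq_self.2 ⟨hT₀, hT₁⟩, hfloor,
    ← Int.natCast_floor_eq_floor (by positivity), decide_eq_decide]
  norm_cast

theorem floor_mul_two_pow_lt (hT₀ : 0 ≤ T) (hT₁ : T < 1) (n : ℕ) : ⌊T * 2 ^ n⌋₊ < 2 ^ n := by
  rw [Nat.floor_lt (by positivity), Nat.cast_pow, Nat.cast_ofNat]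
  exact mul_lt_of_lt_one_left (by positivity) hT₁

theorem lt_floor_add_one_div (T : ℝ) (n : ℕ) :
    T < ((⌊T * 2 ^ n⌋₊ + 1 : ℕ) : ℝ) / (2 ^ n : ℕ) := by
  rw [lt_div_iff₀ (by positivity)]
  push_cast
  exact Nat.lt_floor_add_one _

theorem floor_add_one_div_le (hT₀ : 0 ≤ T) (n : ℕ) :
    ((⌊T * 2 ^ n⌋₊ + 1 : ℕ) : ℝ) / (2 ^ n : ℕ) ≤ T + 1 / 2 ^ n := by
  push_cast
  rw [← sub_le_iff_le_add, ← sub_div, add_sub_cancel_right, div_le_iff₀ (by positivity)]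
  exact Nat.floor_le (by positivity)

end BinaryExpansions

/-! ### Incompressibility -/

section Incompressibility

variable {U : Computer} {T t : ℝ} {k n : ℕ}

-- A program for `fresh k` has not halted by stage `k`, so it still contributes to `Z(T) - Z_k(T)`.
theorem IsOptimal.two_rpow_neg_H_fresh_le (hU : IsOptimal U) (hT₀ : 0 < T) (hT₁ : T ≤ 1)
    (h : U.partitionFunction T < U.stageSum k t) :
    (2 : ℝ) ^ (-(H U (U.fresh k) : ℝ) / T) ≤ U.stageSum k t - U.stageSum k T := by
  obtain ⟨p, hp, hlength⟩ := hU.exists_mem_length_eq_H (U.fresh k)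
  calc (2 : ℝ) ^ (-(H U (U.fresh k) : ℝ) / T)
      ≤ U.partitionFunction T - U.stageSum k T := hlength ▸
        U.two_rpow_le_partitionFunction_sub hT₀ hT₁ (Part.dom_iff_mem.2 ⟨_, hp⟩)
          (U.notMem_stage_of_fresh_mem hp)
    _ ≤ U.stageSum k t - U.stageSum k T := by gcongr

theorem Computer.stageSum_sub_le_div_two_pow (hT₀ : 0 < T) (hTt : T ≤ t) (ht : t ≤ T + 1 / 2 ^ n)
    (hn : 1 / 2 ^ n ≤ (1 - T) / 2) :
    U.stageSum k t - U.stageSum k T ≤ 2 / (T * (1 - T)) / 2 ^ n := by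
  have hgap : 0 < (1 - T) / 2 := lt_of_lt_of_le (by positivity) hn
  have ht' : (1 - T) / 2 ≤ 1 - t := by linarith
  have hT₁ : 0 < 1 - T := by linarith
  calc U.stageSum k t - U.stageSum k T ≤ (t - T) / (T * (1 - t)) :=
        (U.prefixFree_stage k).partitionSum_sub_le hT₀ hTt (by linarith)
    _ ≤ (1 / 2 ^ n) / (T * ((1 - T) / 2)) := by gcongr; linarith
    _ = 2 / (T * (1 - T)) / 2 ^ n := by field_simp

theorem IsOptimal.two_rpow_neg_H_fresh_le_div_two_pow (hU : IsOptimal U) (hT₀ : 0 < T)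
    (hT₁ : T < 1) (ht₀ : 0 < t) (ht : t ≤ T + 1 / 2 ^ n)
    (h : U.partitionFunction T < U.stageSum k t) :
    (2 : ℝ) ^ (-(H U (U.fresh k) : ℝ) / T) ≤ 2 / (T * (1 - T)) / 2 ^ n := by
  have : 0 < 1 - T := sub_pos.2 hT₁
  rcases le_or_gt (1 / 2 ^ n) ((1 - T) / 2) with hn | hn
  · exact (hU.two_rpow_neg_H_fresh_le hT₀ hT₁.le h).trans <|
      Computer.stageSum_sub_le_div_two_pow hT₀
        (Computer.lt_of_partitionFunction_lt_stageSum ht₀ hT₁.le h).le ht hn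
  · calc (2 : ℝ) ^ (-(H U (U.fresh k) : ℝ) / T) ≤ 1 :=
          Real.rpow_le_one_of_one_le_of_nonpos one_le_two
            (by rw [neg_div, neg_nonpos]; positivity)
      _ ≤ 2 / (T * (1 - T)) / 2 ^ n := by
          rw [div_lt_div_iff₀ two_pos (by positivity)] at hn
          rw [div_div, le_div_iff₀ (by positivity), one_mul, mul_assoc]
          exact (mul_le_of_le_one_left (by positivity) hT₁.le).trans (by linarith)

theorem IsOptimal.exists_mul_sub_le_H_fresh (hU : IsOptimal U) (hT₀ : 0 < T) (hT₁ : T < 1) :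
    ∃ c : ℝ, ∀ (n k : ℕ) (t : ℝ), 0 < t → t ≤ T + 1 / 2 ^ n →
      U.partitionFunction T < U.stageSum k t → T * n - c ≤ H U (U.fresh k) := by
  refine ⟨T * Real.logb 2 (2 / (T * (1 - T))), fun n k t ht₀ ht h => ?_⟩
  have hC : 0 < 2 / (T * (1 - T)) := div_pos two_pos (mul_pos hT₀ (sub_pos.2 hT₁))
  have hlog := Real.logb_le_logb_of_le one_lt_two (by positivity)
    (hU.two_rpow_neg_H_fresh_le_div_two_pow hT₀ hT₁ ht₀ ht h)
  rw [Real.logb_rpow two_pos one_lt_two.ne', Real.logb_div hC.ne' (by positivity),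
    Real.logb_pow, Real.logb_self_eq_one one_lt_two, mul_one, div_le_iff₀ hT₀] at hlog
  linarith

-- From a program for the first `n` bits of `T` one computes a stage `k` at which the partition sum
-- at `⌊T 2 ^ n⌋ + 1` over `2 ^ n` exceeds `Z(T)`, and then the string `fresh k`.
theorem IsOptimal.weaklyChaitinRandom (hU : IsOptimal U) (hT₀ : 0 < T) (hT₁ : T < 1)
    (hZ : ComputableReal (U.partitionFunction T)) : WeaklyChaitinRandom U T T := by
  let R (p : List Bool) (x : ℕ × ℕ × ℕ) : Prop := (toBits x.1 x.2.1 ∈ U.f p ∧ x.2.1 < 2 ^ x.1) ∧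
    U.partitionFunction T < U.stageSum x.2.2 (((x.2.1 + 1 : ℕ) : ℝ) / (2 ^ x.1 : ℕ))
  have hn : Computable fun y : List Bool × ℕ × ℕ × ℕ => y.2.1 :=
    Computable.fst.comp Computable.snd
  have hv : Computable fun y : List Bool × ℕ × ℕ × ℕ => y.2.2.1 :=
    Computable.fst.comp (Computable.snd.comp Computable.snd)
  have hk : Computable fun y : List Bool × ℕ × ℕ × ℕ => y.2.2.2 :=
    Computable.snd.comp (Computable.snd.comp Computable.snd)
  have hR : REPred fun y : List Bool × ℕ × ℕ × ℕ => R y.1 y.2 :=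
    rePred_and (rePred_and (rePred_comp (rePred_mem_partrec U.partrec)
        (Computable.fst.pair (computable_toBits.comp hn hv)))
        (rePred_nat_lt hv (computable_two_pow.comp hn)))
      (Computer.rePred_partitionFunction_lt_stageSum hZ hk hv (computable_two_pow.comp hn))
  have hprefix : PrefixFree {p | ∃ x, R p x} :=
    PrefixFree.mono U.prefixFree fun p ⟨_, hx⟩ => Part.dom_iff_mem.2 ⟨_, hx.1.1⟩
  obtain ⟨d, hd⟩ := hU.exists_H_le_of_rePred hR hprefix
    (U.primrec_fresh.to_comp.comp (Computable.snd.comp Computable.snd))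
  obtain ⟨c, hc⟩ := hU.exists_mul_sub_le_H_fresh hT₀ hT₁
  refine ⟨c + d, fun n _ => ?_⟩
  have hlt := lt_floor_add_one_div T n
  obtain ⟨k, hk⟩ := (hU.eventually_partitionFunction_lt_stageSum hT₀ hT₁ hlt).exists
  obtain ⟨p, hp, hlength⟩ := hU.exists_mem_length_eq_H (bits T n)
  rw [bits_eq_toBits hT₀.le hT₁] at hp
  have hfloor := floor_mul_two_pow_lt hT₀.le hT₁ n
  obtain ⟨⟨n', v, k'⟩, ⟨⟨hp', hv⟩, hk'⟩, hH⟩ := hd p (n, _, k) ⟨⟨hp, hfloor⟩, hk⟩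
  obtain ⟨hn', hv'⟩ := toBits_inj hv hfloor (Part.mem_unique hp' hp)
  dsimp only at hn' hv' hk' hH
  rw [hn', hv'] at hk'
  have hH' : (H U (U.fresh k') : ℝ) ≤ H U (bits T n) + d := by exact_mod_cast hlength ▸ hH
  linarith [hc n k' _ (hT₀.trans hlt) (floor_add_one_div_le hT₀.le n) hk']

end Incompressibility

/-! ### Self-delimiting codes -/

section SelfDelimiting

/-- The self-delimiting unary code `1 ⋯ 1 0` of a natural number. -/
def unaryCode (n : ℕ) : List Bool := List.replicate n true ++ [false]

@[simp]
theorem length_unaryCode (n : ℕ) : (unaryCode n).length = n + 1 := by simp [unaryCode]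

theorem primrec_unaryCode : Primrec unaryCode :=
  (Primrec.list_append.comp (Primrec.list_map Primrec.list_range (Primrec₂.const true))
    (Primrec.const [false])).of_eq fun n => by simp [unaryCode, List.map_const']

theorem unaryCode_append_prefix {m n : ℕ} {s t : List Bool}
    (h : unaryCode m ++ s <+: unaryCode n ++ t) : m = n ∧ s <+: t := by
  induction m generalizing n with
  | zero => cases n <;> simp_all [unaryCode, List.replicate_succ]
  | succ m ih =>
    cases n with
    | zero => simp [unaryCode, List.replicate_succ] at h
    | succ n =>
      obtain ⟨rfl, hst⟩ := ih (n := n) (by simpa [unaryCode, List.replicate_succ] using h)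
      exact ⟨rfl, hst⟩

/-- The self-delimiting code of `n` consisting of the unary codes of its quotient and its remainder
modulo `J`. Its length is asymptotic to `n / J`, so its cost per bit of an `n`-bit string can be
made arbitrarily small. -/
def quotRemCode (J n : ℕ) : List Bool := unaryCode (n / J) ++ unaryCode (n % J)

theorem primrec_quotRemCode (J : ℕ) : Primrec (quotRemCode J) :=
  Primrec.list_append.comp
    (primrec_unaryCode.comp (Primrec.nat_div.comp Primrec.id (Primrec.const J)))
    (primrec_unaryCode.comp (Primrec.nat_mod.comp Primrec.id (Primrec.const J)))

theorem length_quotRemCode_le {J : ℕ} (hJ : 0 < J) (n : ℕ) :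
    (quotRemCode J n).length ≤ n / J + (J + 1) := by
  have := Nat.mod_lt n hJ
  simp only [quotRemCode, List.length_append, length_unaryCode]
  omega

theorem quotRemCode_append_prefix {J m n : ℕ} {s t : List Bool}
    (h : quotRemCode J m ++ s <+: quotRemCode J n ++ t) : m = n ∧ s <+: t := by
  rw [quotRemCode, quotRemCode, List.append_assoc, List.append_assoc] at h
  obtain ⟨hdiv, h⟩ := unaryCode_append_prefix h
  obtain ⟨hmod, h⟩ := unaryCode_append_prefix h
  exact ⟨by rw [← Nat.div_add_mod m J, hdiv, hmod, Nat.div_add_mod], h⟩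

variable {U : Computer} {α : Type*} [Primcodable α]

theorem IsOptimal.exists_H_le_of_advice (hU : IsOptimal U) {R : ℕ → ℕ → α → Prop} {m : ℕ → ℕ}
    {g : ℕ × α → List Bool} (hR : REPred fun x : ℕ × ℕ × α => R x.1 x.2.1 x.2.2)
    (hm : Computable m) (hg : Computable g) {J : ℕ} (hJ : 0 < J) :
    ∃ d : ℕ, ∀ n v y, v < 2 ^ m n → R n v y →
      ∃ y', R n v y' ∧ H U (g (n, y')) ≤ m n + n / J + d := by
  let Q (p : List Bool) (x : ℕ × ℕ × α) : Prop :=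
    (p = quotRemCode J x.1 ++ toBits (m x.1) x.2.1 ∧ x.2.1 < 2 ^ m x.1) ∧ R x.1 x.2.1 x.2.2
  have hn : Computable fun x : List Bool × ℕ × ℕ × α => x.2.1 :=
    Computable.fst.comp Computable.snd
  have hv : Computable fun x : List Bool × ℕ × ℕ × α => x.2.2.1 :=
    Computable.fst.comp (Computable.snd.comp Computable.snd)
  have hcode : Computable fun x : List Bool × ℕ × ℕ × α =>
      quotRemCode J x.2.1 ++ toBits (m x.2.1) x.2.2.1 :=
    Primrec.list_append.to_comp.comp ((primrec_quotRemCode J).to_comp.comp hn)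
      (computable_toBits.comp (hm.comp hn) hv)
  have hQ : REPred fun x : List Bool × ℕ × ℕ × α => Q x.1 x.2 :=
    rePred_and (rePred_and (rePred_eq Computable.fst hcode)
      (rePred_nat_lt hv (computable_two_pow.comp (hm.comp hn)))) (rePred_comp hR Computable.snd)
  have hprefix : PrefixFree {p | ∃ x, Q p x} := by
    rintro _ ⟨⟨n, v, y⟩, ⟨rfl, -⟩, -⟩ _ ⟨⟨n', v', y'⟩, ⟨rfl, -⟩, -⟩ h
    obtain ⟨rfl, hbits⟩ := quotRemCode_append_prefix h
    rw [hbits.eq_of_length (by simp)]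
  obtain ⟨d, hd⟩ := hU.exists_H_le_of_rePred hQ hprefix
    (hg.comp (Computable.fst.pair (Computable.snd.comp Computable.snd)))
  refine ⟨J + 1 + d, fun n v y hv hy => ?_⟩
  obtain ⟨⟨n', v', y'⟩, ⟨⟨hp, hv'⟩, hy'⟩, hH⟩ := hd _ (n, v, y) ⟨⟨rfl, hv⟩, hy⟩
  dsimp only at hp hv' hy' hH
  obtain ⟨rfl, hbits⟩ := quotRemCode_append_prefix ⟨[], (List.append_nil _).trans hp⟩
  obtain ⟨-, rfl⟩ := toBits_inj hv hv' (hbits.eq_of_length (by simp))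
  refine ⟨y', hy', hH.trans ?_⟩
  have := length_quotRemCode_le hJ n
  simp only [List.length_append, length_toBits]
  omega

theorem IsOptimal.exists_H_toBits_sub_le (hU : IsOptimal U) :
    ∃ d : ℕ, ∀ n a e, a < 2 ^ n → H U (toBits n (a - e)) ≤ H U (toBits n a) + e + d := by
  let Q (p : List Bool) (x : List Bool × ℕ × ℕ × ℕ) : Prop :=
    (p = unaryCode x.2.2.2 ++ x.1 ∧ toBits x.2.1 x.2.2.1 ∈ U.f x.1) ∧ x.2.2.1 < 2 ^ x.2.1
  have hq : Computable fun y : List Bool × List Bool × ℕ × ℕ × ℕ => y.2.1 :=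
    Computable.fst.comp Computable.snd
  have hrest : Computable fun x : List Bool × ℕ × ℕ × ℕ => x.2 := Computable.snd
  have hn := Computable.fst.comp hrest
  have ha := Computable.fst.comp (Computable.snd.comp hrest)
  have he := Computable.snd.comp (Computable.snd.comp hrest)
  have hcode : Computable fun y : List Bool × List Bool × ℕ × ℕ × ℕ =>
      unaryCode y.2.2.2.2 ++ y.2.1 :=
    Primrec.list_append.to_comp.comp (primrec_unaryCode.to_comp.comp (he.comp Computable.snd)) hq
  have hQ : REPred fun y : List Bool × List Bool × ℕ × ℕ × ℕ => Q y.1 y.2 :=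
    rePred_and (rePred_and (rePred_eq Computable.fst hcode)
      (rePred_comp (rePred_mem_partrec U.partrec)
        (hq.pair ((computable_toBits.comp hn ha).comp Computable.snd))))
      (rePred_nat_lt (ha.comp Computable.snd) (computable_two_pow.comp (hn.comp Computable.snd)))
  have hprefix : PrefixFree {p | ∃ x, Q p x} := by
    rintro _ ⟨⟨q, n, a, e⟩, ⟨rfl, hq⟩, -⟩ _ ⟨⟨q', n', a', e'⟩, ⟨rfl, hq'⟩, -⟩ h
    obtain ⟨rfl, h⟩ := unaryCode_append_prefix h
    rw [U.prefixFree q (Part.dom_iff_mem.2 ⟨_, hq⟩) q' (Part.dom_iff_mem.2 ⟨_, hq'⟩) h]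
  obtain ⟨d, hd⟩ := hU.exists_H_le_of_rePred hQ hprefix
    (computable_toBits.comp hn (Primrec.nat_sub.to_comp.comp ha he))
  refine ⟨d + 1, fun n a e ha => ?_⟩
  obtain ⟨p, hp, hlength⟩ := hU.exists_mem_length_eq_H (toBits n a)
  obtain ⟨⟨q, n', a', e'⟩, ⟨⟨hcode', hq⟩, ha'⟩, hH⟩ := hd _ (p, n, a, e) ⟨⟨rfl, hp⟩, ha⟩
  dsimp only at hcode' hq ha' hH
  obtain ⟨rfl, hpq⟩ := unaryCode_append_prefix ⟨[], (List.append_nil _).trans hcode'⟩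
  obtain rfl := hpq.eq_of_length (by simpa using congrArg List.length hcode')
  obtain ⟨rfl, rfl⟩ := toBits_inj ha ha' (Part.mem_unique hp hq)
  rw [List.length_append, length_unaryCode, hlength] at hH
  omega

end SelfDelimiting

/-! ### Compressibility -/

section Compressibility

variable {U : Computer} {T : ℝ}

theorem IsOptimal.exists_H_bits_le_H_toBits_add (hU : IsOptimal U) (hT₀ : 0 ≤ T) (hT₁ : T < 1)
    (E : ℕ) : ∃ d : ℕ, ∀ n a, a < 2 ^ n → ⌊T * 2 ^ n⌋₊ ≤ a → a ≤ ⌊T * 2 ^ n⌋₊ + E →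
      H U (bits T n) ≤ H U (toBits n a) + d := by
  obtain ⟨d, hd⟩ := hU.exists_H_toBits_sub_le
  refine ⟨E + d, fun n a ha hle hE => ?_⟩
  have := hd n a (a - ⌊T * 2 ^ n⌋₊) ha
  rw [Nat.sub_sub_self hle, ← bits_eq_toBits hT₀ hT₁] at this
  omega

theorem IsOptimal.exists_H_bits_le_of_advice (hU : IsOptimal U) (hT₀ : 0 ≤ T) (hT₁ : T < 1)
    {α : Type*} [Primcodable α] {R : ℕ → ℕ → α → Prop} {m v : ℕ → ℕ} {a : α → ℕ} {E J : ℕ}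
    (hR : REPred fun x : ℕ × ℕ × α => R x.1 x.2.1 x.2.2) (hm : Computable m) (ha : Computable a)
    (hv : ∀ n, v n < 2 ^ m n)
    (hRa : ∀ n y, R n (v n) y → a y < 2 ^ n ∧ ⌊T * 2 ^ n⌋₊ ≤ a y ∧ a y ≤ ⌊T * 2 ^ n⌋₊ + E)
    (hJ : 0 < J) : ∃ d : ℕ, ∀ n y, R n (v n) y → H U (bits T n) ≤ m n + n / J + d := by
  obtain ⟨d, hd⟩ := hU.exists_H_le_of_advice (g := fun x => toBits x.1 (a x.2)) hR hm
    (computable_toBits.comp Computable.fst (ha.comp Computable.snd)) hJ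
  obtain ⟨e, he⟩ := hU.exists_H_bits_le_H_toBits_add hT₀ hT₁ E
  refine ⟨d + e, fun n y hy => ?_⟩
  obtain ⟨y', hy', hH⟩ := hd n (v n) y (hv n) hy
  obtain ⟨hlt, hle, hE⟩ := hRa n y' hy'
  have := he n (a y') hlt hle hE
  dsimp only at hH
  omega

theorem IsOptimal.exists_H_bits_le_of_leftComputable (hU : IsOptimal U) (hT₀ : 0 ≤ T)
    (hT₁ : T < 1) (hright : RightComputable T) (hleft : LeftComputable T) {J : ℕ} (hJ : 0 < J) :
    ∃ d : ℕ, ∀ n, H U (bits T n) ≤ n / J + d := by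
  let R (n _v a : ℕ) : Prop := (a < 2 ^ n ∧ T * (2 ^ n : ℕ) + (0 : ℕ) < (a + 1 : ℕ)) ∧
    -T * (2 ^ n : ℕ) + a < (1 : ℕ)
  have ha : Computable fun x : ℕ × ℕ × ℕ => x.2.2 := Computable.snd.comp Computable.snd
  have hpow : Computable fun x : ℕ × ℕ × ℕ => 2 ^ x.1 := computable_two_pow.comp Computable.fst
  have hR : REPred fun x : ℕ × ℕ × ℕ => R x.1 x.2.1 x.2.2 :=
    rePred_and (rePred_and (rePred_nat_lt ha hpow)
      (hright.rePred_mul_add_lt (Computable.succ.comp ha) hpow (Computable.const 0)))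
      (RightComputable.rePred_mul_add_lt hleft (Computable.const 1) hpow ha)
  have hRa (n a : ℕ) (h : R n 0 a) :
      a < 2 ^ n ∧ ⌊T * 2 ^ n⌋₊ ≤ a ∧ a ≤ ⌊T * 2 ^ n⌋₊ + 1 := by
    obtain ⟨⟨hlt, hupper⟩, hlower⟩ := h
    push_cast at hupper hlower
    refine ⟨hlt, Nat.lt_succ_iff.1 ((Nat.floor_lt (by positivity)).2 ?_), ?_⟩
    · push_cast
      linarith
    · have : (a : ℝ) < (⌊T * 2 ^ n⌋₊ + 1 + 1 : ℕ) := by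
        push_cast
        linarith [Nat.lt_floor_add_one (T * 2 ^ n)]
      exact Nat.lt_succ_iff.1 (Nat.cast_lt.1 this)
  obtain ⟨d, hd⟩ := hU.exists_H_bits_le_of_advice (m := fun _ => 0) (v := fun _ => 0) hT₀ hT₁ hR
    (Computable.const 0) Computable.id (fun _ => one_pos) hRa hJ
  refine ⟨d, fun n => ?_⟩
  have hfloor := Nat.floor_le (show 0 ≤ T * 2 ^ n by positivity)
  have hfloor' := Nat.lt_floor_add_one (T * 2 ^ n)
  refine (hd n ⌊T * 2 ^ n⌋₊ ⟨⟨floor_mul_two_pow_lt hT₀ hT₁ n, ?_⟩, ?_⟩).trans_eq (by simp)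
  all_goals
    push_cast
    linarith

theorem IsOptimal.not_leftComputable (hU : IsOptimal U) {D : ℝ} (hD : 0 < D) (hT₀ : 0 ≤ T)
    (hT₁ : T < 1) (hright : RightComputable T) (hrandom : WeaklyChaitinRandom U D T) :
    ¬ LeftComputable T := by
  intro hleft
  obtain ⟨c, hc⟩ := hrandom
  obtain ⟨J, hJ⟩ := exists_nat_gt (2 / D)
  have hJ₀ : (0 : ℝ) < J := (div_pos two_pos hD).trans hJ
  obtain ⟨d, hd⟩ := hU.exists_H_bits_le_of_leftComputable hT₀ hT₁ hright hleft
    (Nat.cast_pos.1 hJ₀)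
  have hbound (n : ℕ) (hn : 1 ≤ n) : D / 2 * n ≤ c + d := by
    have hdiv : ((n / J : ℕ) : ℝ) ≤ D / 2 * n := by
      refine Nat.cast_div_le.trans ?_
      rw [div_lt_iff₀ hD] at hJ
      rw [div_le_iff₀ hJ₀]
      nlinarith
    have : (H U (bits T n) : ℝ) ≤ (n / J : ℕ) + d := by exact_mod_cast hd n
    linarith [hc n hn]
  obtain ⟨n, hn⟩ := exists_nat_gt ((c + d) / (D / 2))
  rw [div_lt_iff₀ (half_pos hD)] at hn
  have := hbound (n + 1) n.succ_pos
  push_cast at this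
  linarith

theorem exists_nat_lt_two_pow_mul_le {x : ℝ} (hx₀ : 0 < x) (hx₁ : x ≤ 1) (m : ℕ) :
    ∃ v : ℕ, v < 2 ^ m ∧ (v : ℝ) < (2 ^ m : ℕ) * x ∧ (2 ^ m : ℕ) * x ≤ v + 1 := by
  have hpos : 0 < ⌈((2 ^ m : ℕ) : ℝ) * x⌉₊ := Nat.ceil_pos.2 (by positivity)
  obtain ⟨v, hv⟩ := Nat.exists_eq_add_one.2 hpos
  have hlt : (v : ℝ) < (2 ^ m : ℕ) * x := Nat.lt_ceil.1 (by omega)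
  refine ⟨v, ?_, hlt, ?_⟩
  · exact Nat.cast_lt.1 (hlt.trans_le (mul_le_of_le_one_right (Nat.cast_nonneg _) hx₁))
  · exact_mod_cast hv ▸ Nat.le_ceil (((2 ^ m : ℕ) : ℝ) * x)

/-- The stage `k` and the numerator `a` locate the first `n` bits of `T`: the advice `v`, a lower
bound of `2 ^ m * Z(1)`, forces `k` to be late, and the partition sum of stage `k` at
`(a + 1) / 2 ^ n` exceeds `Z(T)` by less than `D / 2 ^ n`. Denominators are cleared so that every
condition is visibly semidecidable. -/
structure Computer.Locates (U : Computer) (T : ℝ) (k₀ D m n v k a : ℕ) : Prop where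
  le_stage : k₀ ≤ k
  advice_lt : (v : ℝ) < (2 ^ m : ℕ) * U.stageSum k 1
  lt_two_pow : a < 2 ^ n
  lt_stageSum : U.partitionFunction T < U.stageSum k (((a + 1 : ℕ) : ℝ) / (2 ^ n : ℕ))
  stageSum_lt : (2 ^ n : ℕ) * U.stageSum k (((a + 1 : ℕ) : ℝ) / (2 ^ n : ℕ)) <
    (2 ^ n : ℕ) * U.partitionFunction T + (D : ℕ)

theorem Computer.rePred_locates (hZ : ComputableReal (U.partitionFunction T)) {m : ℕ → ℕ}
    (hm : Computable m) (k₀ D : ℕ) : REPred fun x : ℕ × ℕ × ℕ × ℕ =>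
      U.Locates T k₀ D (m x.1) x.1 x.2.1 x.2.2.1 x.2.2.2 := by
  have hn : Computable fun x : ℕ × ℕ × ℕ × ℕ => x.1 := Computable.fst
  have hv : Computable fun x : ℕ × ℕ × ℕ × ℕ => x.2.1 := Computable.fst.comp Computable.snd
  have hk : Computable fun x : ℕ × ℕ × ℕ × ℕ => x.2.2.1 :=
    Computable.fst.comp (Computable.snd.comp Computable.snd)
  have ha : Computable fun x : ℕ × ℕ × ℕ × ℕ => x.2.2.2 :=
    Computable.snd.comp (Computable.snd.comp Computable.snd)
  have hpow : Computable fun x : ℕ × ℕ × ℕ × ℕ => 2 ^ x.1 := computable_two_pow.comp hn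
  have hone := U.dyadicComputable_stageSum.comp
    (hk.pair ((Computable.const 0).pair (Computable.const 1)))
  have hsum := U.dyadicComputable_stageSum.comp (hk.pair (ha.pair hpow))
  have hconst := DyadicComputable.const (α := ℕ × ℕ × ℕ × ℕ) hZ (U.partitionFunction_nonneg T)
  have hadvice := (DyadicComputable.natCast hv).rePred_lt
    (hone.natCast_mul (computable_two_pow.comp (hm.comp hn)))
  have hupper := (hsum.natCast_mul hpow).rePred_lt
    ((hconst.natCast_mul hpow).add (DyadicComputable.natCast (Computable.const D)))
  refine (rePred_and (rePred_and (rePred_nat_le (Computable.const k₀) hk) hadvice)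
    (rePred_and (rePred_nat_lt ha hpow) (rePred_and (hconst.rePred_lt hsum) hupper))).of_eq
      fun x => ?_
  simp only [zero_add, Nat.cast_one, div_one]
  exact ⟨fun ⟨⟨h₁, h₂⟩, h₃, h₄, h₅⟩ => ⟨h₁, h₂, h₃, h₄, h₅⟩,
    fun ⟨h₁, h₂, h₃, h₄, h₅⟩ => ⟨⟨h₁, h₂⟩, h₃, h₄, h₅⟩⟩

-- The exponent `1 / T` turns an error `2 ^ (-m)` in `Z(1)` into an error `2 ^ (-m / T)` in `Z(T)`.
theorem Computer.partitionFunction_sub_le_of_advice (hT₀ : 0 < T) (hT₁ : T ≤ 1) {m n v k : ℕ}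
    (hm : T * n ≤ m) (hv : (2 ^ m : ℕ) * U.partitionFunction 1 ≤ v + 1)
    (hk : (v : ℝ) < (2 ^ m : ℕ) * U.stageSum k 1) :
    U.partitionFunction T - U.stageSum k T ≤ 1 / 2 ^ n := by
  have hone : U.partitionFunction 1 - U.stageSum k 1 ≤ (2 : ℝ) ^ (-(m : ℝ)) := by
    push_cast at hv hk
    rw [Real.rpow_neg two_pos.le, Real.rpow_natCast, ← one_div, le_div_iff₀ (by positivity)]
    linarith
  calc U.partitionFunction T - U.stageSum k T ≤ ((2 : ℝ) ^ (-(m : ℝ))) ^ (1 / T) :=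
        U.partitionFunction_sub_le_rpow hT₀ hT₁ hone
    _ = (2 : ℝ) ^ (-(m / T)) := by
        rw [← Real.rpow_mul two_pos.le, mul_one_div, neg_div]
    _ ≤ (2 : ℝ) ^ (-(n : ℝ)) :=
        Real.rpow_le_rpow_of_exponent_le one_le_two
          (neg_le_neg ((le_div_iff₀ hT₀).2 (by rwa [mul_comm])))
    _ = 1 / 2 ^ n := by rw [Real.rpow_neg two_pos.le, Real.rpow_natCast, one_div]

theorem IsOptimal.exists_numerator_le_floor_add (hU : IsOptimal U) (hT₀ : 0 < T) (hT₁ : T ≤ 1)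
    (D : ℕ) : ∃ k₀ E : ℕ, ∀ {m n v k a : ℕ}, U.Locates T k₀ D m n v k a → T * n ≤ m →
      (2 ^ m : ℕ) * U.partitionFunction 1 ≤ v + 1 →
      ⌊T * 2 ^ n⌋₊ ≤ a ∧ a ≤ ⌊T * 2 ^ n⌋₊ + E := by
  obtain ⟨c, hc, k₀, hslope⟩ := hU.exists_mul_sub_le_stageSum_sub hT₀
  obtain ⟨E, hE⟩ := exists_nat_ge ((D + 1) / c)
  refine ⟨k₀, E, fun {m n v k a} h hm hv => ?_⟩
  have hTt := Computer.lt_of_partitionFunction_lt_stageSum (by positivity) hT₁ h.lt_stageSum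
  have ht : ((a + 1 : ℕ) : ℝ) / (2 ^ n : ℕ) ≤ 1 :=
    div_le_one_of_le₀ (Nat.cast_le.2 h.lt_two_pow) (Nat.cast_nonneg _)
  have hgap := Computer.partitionFunction_sub_le_of_advice hT₀ hT₁ hm hv h.advice_lt
  have hlower := hslope k h.le_stage _ hTt.le ht
  have hupper := h.stageSum_lt
  generalize U.stageSum k (((a + 1 : ℕ) : ℝ) / (2 ^ n : ℕ)) = s at hlower hupper
  have hpow : (0 : ℝ) < 2 ^ n := by positivity
  push_cast at hTt hlower hupper
  rw [lt_div_iff₀ hpow] at hTt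
  rw [le_div_iff₀ hpow] at hgap
  rw [div_le_iff₀ hc] at hE
  refine ⟨Nat.lt_succ_iff.1 ((Nat.floor_lt (by positivity)).2 (by exact_mod_cast hTt)), ?_⟩
  have hscaled : c * (a + 1 - T * 2 ^ n) ≤ c * E := by
    calc c * (a + 1 - T * 2 ^ n) = c * ((a + 1) / 2 ^ n - T) * 2 ^ n := by field_simp
      _ ≤ (s - U.stageSum k T) * 2 ^ n := by gcongr
      _ ≤ c * E := by linarith
  have hlt : (a : ℝ) < (⌊T * 2 ^ n⌋₊ + E : ℕ) := by
    push_cast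
    linarith [le_of_mul_le_mul_left hscaled hc, Nat.lt_floor_add_one (T * 2 ^ n)]
  exact (Nat.cast_lt.1 hlt).le

theorem IsOptimal.partitionFunction_one_pos (hU : IsOptimal U) : 0 < U.partitionFunction 1 := by
  obtain ⟨k, hk⟩ := (hU.eventually_partitionFunction_lt_stageSum one_half_pos one_half_lt_one
    one_half_lt_one).exists
  exact (U.partitionFunction_nonneg _).trans_lt (hk.trans_le (U.stageSum_le one_pos le_rfl k))

theorem IsOptimal.exists_locates_floor (hU : IsOptimal U) (hT₀ : 0 < T) (hT₁ : T < 1)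
    {D m n v : ℕ} (k₀ : ℕ) (hn : 1 / 2 ^ n ≤ (1 - T) / 2) (hD : 2 / (T * (1 - T)) < D)
    (hv : (v : ℝ) < (2 ^ m : ℕ) * U.partitionFunction 1) :
    ∃ k, U.Locates T k₀ D m n v k ⌊T * 2 ^ n⌋₊ := by
  have hTt := lt_floor_add_one_div T n
  have hadvice : ∀ᶠ k in atTop, (v : ℝ) < (2 ^ m : ℕ) * U.stageSum k 1 :=
    ((U.tendsto_stageSum one_pos le_rfl).const_mul _).eventually_const_lt hv
  obtain ⟨k, hk₀, hadvice, hlt⟩ := ((eventually_ge_atTop k₀).and (hadvice.and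
    (hU.eventually_partitionFunction_lt_stageSum hT₀ hT₁ hTt))).exists
  refine ⟨k, hk₀, hadvice, floor_mul_two_pow_lt hT₀.le hT₁ n, hlt, ?_⟩
  have hgap := Computer.stageSum_sub_le_div_two_pow (U := U) (k := k) hT₀ hTt.le
    (floor_add_one_div_le hT₀.le n) hn
  have hle := U.stageSum_le hT₀ hT₁.le k
  have hpow : (0 : ℝ) < (2 ^ n : ℕ) := by positivity
  rw [le_div_iff₀ (by positivity)] at hgap
  have : (2 ^ n : ℕ) * U.stageSum k T ≤ (2 ^ n : ℕ) * U.partitionFunction T := by gcongr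
  push_cast at this hgap ⊢
  linarith

theorem IsOptimal.eventually_H_bits_le (hU : IsOptimal U) (hT₀ : 0 < T) (hT₁ : T < 1)
    (hZ : ComputableReal (U.partitionFunction T)) {m : ℕ → ℕ} (hm : Computable m)
    (hTm : ∀ n : ℕ, T * n ≤ m n) {J : ℕ} (hJ : 0 < J) :
    ∃ d : ℕ, ∀ᶠ n in atTop, H U (bits T n) ≤ m n + n / J + d := by
  obtain ⟨D, hD⟩ := exists_nat_gt (2 / (T * (1 - T)))
  obtain ⟨k₀, E, hE⟩ := hU.exists_numerator_le_floor_add hT₀ hT₁.le D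
  choose v hv_lt hv hv_ge using fun n => exists_nat_lt_two_pow_mul_le
    hU.partitionFunction_one_pos U.partitionFunction_one_le (m n)
  obtain ⟨d, hd⟩ := hU.exists_H_bits_le_of_advice hT₀.le hT₁
    (R := fun n v (x : ℕ × ℕ) => U.Locates T k₀ D (m n) n v x.1 x.2)
    (Computer.rePred_locates hZ hm k₀ D) hm Computable.snd hv_lt
    (fun n x hx => ⟨hx.lt_two_pow, hE hx (hTm n) (hv_ge n)⟩) hJ
  refine ⟨d, ?_⟩
  have hlim : Tendsto (fun n : ℕ => (1 : ℝ) / 2 ^ n) atTop (nhds 0) := by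
    simpa only [one_div, inv_pow] using
      tendsto_pow_atTop_nhds_zero_of_lt_one (by norm_num : (0 : ℝ) ≤ 2⁻¹) (by norm_num)
  filter_upwards [hlim.eventually_le_const (half_pos (sub_pos.2 hT₁))] with n hn
  obtain ⟨k, hk⟩ := hU.exists_locates_floor hT₀ hT₁ k₀ hn hD (hv n)
  exact hd n (k, _) hk

theorem WeaklyChaitinRandom.eventually_lt_H_bits_div {D b : ℝ} (h : WeaklyChaitinRandom U D T)
    (hb : b < D) : ∀ᶠ n : ℕ in atTop, b < (H U (bits T n) : ℝ) / n := by
  obtain ⟨c, hc⟩ := h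
  obtain ⟨N, hN⟩ := exists_nat_gt (c / (D - b))
  filter_upwards [eventually_ge_atTop N, eventually_gt_atTop 0] with n hNn hn
  have hlt : c / (D - b) < n := hN.trans_le (Nat.cast_le.2 hNn)
  rw [div_lt_iff₀ (sub_pos.2 hb)] at hlt
  rw [lt_div_iff₀ (Nat.cast_pos.2 hn)]
  linarith [hc n hn]

theorem exists_computable_nat_between {x y : ℝ} (hx : 0 ≤ x) (hxy : x < y) :
    ∃ m : ℕ → ℕ, Computable m ∧ ∀ n : ℕ, x * n ≤ m n ∧ m n ≤ y * n + 1 := by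
  obtain ⟨q, hxq, hqy⟩ := exists_rat_btwn hxy
  have hq : (q.num.toNat : ℝ) / q.den = q := by
    rw [toNat_num_div_den (K := ℝ), max_eq_left (hx.trans hxq.le)]
  refine ⟨fun n => q.num.toNat * n / q.den + 1,
    (Primrec.succ.comp (Primrec.nat_div.comp (Primrec.nat_mul.comp (Primrec.const _) .id)
      (Primrec.const _))).to_comp, fun n => ?_⟩
  have hcast : ((q.num.toNat * n : ℕ) : ℝ) / q.den = q * n := by
    rw [Nat.cast_mul, mul_div_right_comm, hq]
  have hlower := Nat.lt_floor_add_one (((q.num.toNat * n : ℕ) : ℝ) / q.den)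
  have hupper := Nat.cast_div_le (α := ℝ) (m := q.num.toNat * n) (n := q.den)
  rw [Nat.floor_div_eq_div] at hlower
  rw [hcast] at hlower hupper
  push_cast
  constructor
  · exact (mul_le_mul_of_nonneg_right hxq.le n.cast_nonneg).trans hlower.le
  · linarith [mul_le_mul_of_nonneg_right hqy.le (n.cast_nonneg (α := ℝ))]

theorem IsOptimal.eventually_H_bits_div_lt (hU : IsOptimal U) (hT₀ : 0 < T) (hT₁ : T < 1)
    (hZ : ComputableReal (U.partitionFunction T)) {b : ℝ} (hb : T < b) :
    ∀ᶠ n : ℕ in atTop, (H U (bits T n) : ℝ) / n < b := by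
  obtain ⟨q, hTq, hqb⟩ := exists_between hb
  obtain ⟨m, hm, hmq⟩ := exists_computable_nat_between hT₀.le hTq
  obtain ⟨j, hj⟩ := exists_nat_one_div_lt (sub_pos.2 hqb)
  obtain ⟨d, hd⟩ := hU.eventually_H_bits_le hT₀ hT₁ hZ hm (fun n => (hmq n).1) j.succ_pos
  obtain ⟨N, hN⟩ := exists_nat_gt ((d + 1) / (b - q - 1 / (j + 1)))
  filter_upwards [hd, eventually_ge_atTop N, eventually_gt_atTop 0] with n hH hNn hn
  have hlt : (d + 1) / (b - q - 1 / (j + 1)) < n := hN.trans_le (Nat.cast_le.2 hNn)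
  rw [div_lt_iff₀ (sub_pos.2 hj)] at hlt
  have hdiv : ((n / (j + 1) : ℕ) : ℝ) ≤ n * (1 / (j + 1)) := by
    rw [mul_one_div]
    exact_mod_cast Nat.cast_div_le (α := ℝ) (m := n) (n := j + 1)
  have hH' : (H U (bits T n) : ℝ) ≤ m n + (n / (j + 1) : ℕ) + d := by exact_mod_cast hH
  rw [div_lt_iff₀ (Nat.cast_pos.2 hn)]
  linarith [(hmq n).2]

theorem IsOptimal.tendsto_H_bits_div (hU : IsOptimal U) (hT₀ : 0 < T) (hT₁ : T < 1)
    (hZ : ComputableReal (U.partitionFunction T)) :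
    Tendsto (fun n : ℕ => (H U (bits T n) : ℝ) / n) atTop (nhds T) :=
  tendsto_order.2 ⟨fun _ => (hU.weaklyChaitinRandom hT₀ hT₁ hZ).eventually_lt_H_bits_div,
    fun _ => hU.eventually_H_bits_div_lt hT₀ hT₁ hZ⟩

end Compressibility

/-- **Theorem (paper Thm 14, fixed point theorem on compression rate).**
For `T ∈ (0,1)`, if `Z(T)` is a computable real number, then `T` is
right-computable but not left-computable, `T` is weakly Chaitin `T`-random
and `T`-compressible, and `lim_{n→∞} H(T_n)/n = T`. -/
theorem fixed_point_compression_rate (U : Computer) (hU : IsOptimal U)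
    (T : ℝ) (hT0 : 0 < T) (hT1 : T < 1)
    (hZ : ComputableReal (∑' p, zterm U T p)) :
    RightComputable T ∧ ¬ LeftComputable T ∧
    WeaklyChaitinRandom U T T ∧ DCompressible U T T ∧
    Tendsto (fun n : ℕ => (H U (bits T n) : ℝ) / n) atTop (nhds T) := by
  have hright := hU.rightComputable hT0 hT1 hZ
  have hrandom := hU.weaklyChaitinRandom hT0 hT1 hZ
  have hlim := hU.tendsto_H_bits_div hT0 hT1 hZ
  exact ⟨hright, hU.not_leftComputable hT0 hT0.le hT1 hright hrandom, hrandom,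
    hlim.limsup_eq.le, hlim⟩
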